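/- arXiv:1101.5224 — 3 statements merged into one kernel-verified Lean document; each statement's English description precedes it below -/
import Mathlib

section
/- Let n ≥ 2 and R > 0, and let B_R(0) be the open ball of radius R centered at the origin in ℝⁿ. Then the first nonzero Neumann eigenvalue of the bi-harmonic operator on the ball equals the square of the first nonzero Neumann eigenvalue of the Laplacian on the ball: Υ₁(B_R(0)) = μ₁(B_R(0))². -/
open MeasureTheory Set Metric

noncomputable section

/-- The Laplacian of `f` (sum of second partial derivatives), with all derivatives
taken within the set `S`. -/
def lapWithin {n : ℕ} (S : Set (EuclideanSpace ℝ (Fin n)))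
    (f : EuclideanSpace ℝ (Fin n) → ℝ) (x : EuclideanSpace ℝ (Fin n)) : ℝ :=
  ∑ i : Fin n, fderivWithin ℝ
    (fun y => fderivWithin ℝ f S y (EuclideanSpace.single i 1)) S x (EuclideanSpace.single i 1)

/-- `μ` is a Neumann eigenvalue of the Laplacian on the ball `B_R(0) ⊂ ℝⁿ`: there is a nonzero
function `u`, smooth on the closed ball, with `Δu = −μ·u` in the open ball and vanishing outward
normal (i.e. radial) derivative on the boundary sphere. -/
def IsLapNeumannEigenvalueBall (n : ℕ) (R μ : ℝ) : Prop :=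
  ∃ u : EuclideanSpace ℝ (Fin n) → ℝ,
    ContDiffOn ℝ (⊤ : ℕ∞) u (closedBall 0 R) ∧
    (∃ x ∈ closedBall (0 : EuclideanSpace ℝ (Fin n)) R, u x ≠ 0) ∧
    (∀ x ∈ ball (0 : EuclideanSpace ℝ (Fin n)) R,
      lapWithin (closedBall 0 R) u x = -μ * u x) ∧
    (∀ x : EuclideanSpace ℝ (Fin n), ‖x‖ = R →
      fderivWithin ℝ u (closedBall 0 R) x (‖x‖⁻¹ • x) = 0)

/-- `Υ` is a Neumann eigenvalue of the bi-harmonic operator `Δ²` on the ball `B_R(0) ⊂ ℝⁿ`: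
there is a nonzero function `u`, smooth on the closed ball, with `Δ²u = Υ·u` in the open ball and
`∂u/∂n = ∂(Δu)/∂n = 0` on the boundary sphere. -/
def IsBiLapNeumannEigenvalueBall (n : ℕ) (R Υ : ℝ) : Prop :=
  ∃ u : EuclideanSpace ℝ (Fin n) → ℝ,
    ContDiffOn ℝ (⊤ : ℕ∞) u (closedBall 0 R) ∧
    (∃ x ∈ closedBall (0 : EuclideanSpace ℝ (Fin n)) R, u x ≠ 0) ∧
    (∀ x ∈ ball (0 : EuclideanSpace ℝ (Fin n)) R,
      lapWithin (closedBall 0 R) (lapWithin (closedBall 0 R) u) x = Υ * u x) ∧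
    (∀ x : EuclideanSpace ℝ (Fin n), ‖x‖ = R →
      fderivWithin ℝ u (closedBall 0 R) x (‖x‖⁻¹ • x) = 0) ∧
    (∀ x : EuclideanSpace ℝ (Fin n), ‖x‖ = R →
      fderivWithin ℝ (lapWithin (closedBall 0 R) u) (closedBall 0 R) x (‖x‖⁻¹ • x) = 0)

/-- `Υ` is a Neumann eigenvalue of the even-multi-Laplacian `Δ^(2m)` on the ball `B_R(0) ⊂ ℝⁿ`:
there is a nonzero function `u`, smooth on the closed ball, with `Δ^(2m)u = Υ·u` in the open ball
and `∂(Δʲu)/∂n = 0` on the boundary sphere for every `j = 0, 1, …, 2m−1`. -/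
def IsPolyLapNeumannEigenvalueBall (n m : ℕ) (R Υ : ℝ) : Prop :=
  ∃ u : EuclideanSpace ℝ (Fin n) → ℝ,
    ContDiffOn ℝ (⊤ : ℕ∞) u (closedBall 0 R) ∧
    (∃ x ∈ closedBall (0 : EuclideanSpace ℝ (Fin n)) R, u x ≠ 0) ∧
    (∀ x ∈ ball (0 : EuclideanSpace ℝ (Fin n)) R,
      (lapWithin (closedBall 0 R))^[2 * m] u x = Υ * u x) ∧
    (∀ j < 2 * m, ∀ x : EuclideanSpace ℝ (Fin n), ‖x‖ = R →
      fderivWithin ℝ ((lapWithin (closedBall 0 R))^[j] u) (closedBall 0 R) x (‖x‖⁻¹ • x) = 0)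

section helpers

variable {n : ℕ}

local notation "E" => EuclideanSpace ℝ (Fin n)

lemma aux_ud {R : ℝ} (hR : 0 < R) : UniqueDiffOn ℝ (closedBall (0 : E) R) := by
  apply uniqueDiffOn_convex (convex_closedBall _ _)
  refine ⟨0, ?_⟩
  rw [mem_interior_iff_mem_nhds]
  exact closedBall_mem_nhds _ hR

lemma aux_closure {R : ℝ} (hR : 0 < R) {f g : E → ℝ}
    (hf : ContinuousOn f (closedBall 0 R)) (hg : ContinuousOn g (closedBall 0 R))
    (h : ∀ x ∈ ball (0 : E) R, f x = g x) : ∀ x ∈ closedBall (0 : E) R, f x = g x := by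
  have := Set.EqOn.of_subset_closure (s := ball (0 : E) R) (t := closedBall (0 : E) R)
    (f := f) (g := g) h hf hg ball_subset_closedBall
    (by rw [closure_ball _ hR.ne'])
  exact this

lemma aux_smooth_partial {R : ℝ} (hR : 0 < R) {f : E → ℝ}
    (hf : ContDiffOn ℝ (⊤ : ℕ∞) f (closedBall 0 R)) (v : E) :
    ContDiffOn ℝ (⊤ : ℕ∞) (fun y => fderivWithin ℝ f (closedBall 0 R) y v) (closedBall 0 R) :=
  (hf.fderivWithin (m := (⊤ : ℕ∞)) (aux_ud hR) (by simp)).clm_apply contDiffOn_const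

lemma aux_smooth_lap {R : ℝ} (hR : 0 < R) {f : E → ℝ}
    (hf : ContDiffOn ℝ (⊤ : ℕ∞) f (closedBall 0 R)) :
    ContDiffOn ℝ (⊤ : ℕ∞) (lapWithin (closedBall 0 R) f) (closedBall 0 R) := by
  unfold lapWithin
  apply ContDiffOn.sum
  intro i _
  exact aux_smooth_partial hR (aux_smooth_partial hR hf _) _

lemma aux_diff {R : ℝ} {f : E → ℝ}
    (hf : ContDiffOn ℝ (⊤ : ℕ∞) f (closedBall 0 R)) : DifferentiableOn ℝ f (closedBall 0 R) :=
  hf.differentiableOn (by simp)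

lemma aux_lap_congr {S : Set E} {f g : E → ℝ} (h : ∀ x ∈ S, f x = g x) :
    ∀ x ∈ S, lapWithin S f x = lapWithin S g x := by
  intro x hx
  unfold lapWithin
  refine Finset.sum_congr rfl fun i _ => ?_
  have key : ∀ y ∈ S, fderivWithin ℝ f S y (EuclideanSpace.single i 1) =
      fderivWithin ℝ g S y (EuclideanSpace.single i 1) := fun y hy => by
    rw [fderivWithin_congr h (h y hy)]
  rw [fderivWithin_congr key (key x hx)]

lemma aux_fd_lin {R : ℝ} (hR : 0 < R) {f g : E → ℝ}
    (hf : DifferentiableOn ℝ f (closedBall 0 R)) (hg : DifferentiableOn ℝ g (closedBall 0 R))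
    (c : ℝ) {x : E} (hx : x ∈ closedBall (0 : E) R) (v : E) :
    fderivWithin ℝ (fun y => f y + c * g y) (closedBall 0 R) x v =
      fderivWithin ℝ f (closedBall 0 R) x v + c * fderivWithin ℝ g (closedBall 0 R) x v := by
  have h := ((hf x hx).hasFDerivWithinAt.add
    ((hg x hx).hasFDerivWithinAt.const_mul c)).fderivWithin (aux_ud hR x hx)
  have h2 : fderivWithin ℝ (fun y => f y + c * g y) (closedBall 0 R) x = _ := h
  rw [h2]
  simp

lemma aux_lap_lin {R : ℝ} (hR : 0 < R) {f g : E → ℝ}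
    (hf : ContDiffOn ℝ (⊤ : ℕ∞) f (closedBall 0 R)) (hg : ContDiffOn ℝ (⊤ : ℕ∞) g (closedBall 0 R))
    (c : ℝ) {x : E} (hx : x ∈ closedBall (0 : E) R) :
    lapWithin (closedBall 0 R) (fun y => f y + c * g y) x =
      lapWithin (closedBall 0 R) f x + c * lapWithin (closedBall 0 R) g x := by
  unfold lapWithin
  rw [Finset.mul_sum, ← Finset.sum_add_distrib]
  refine Finset.sum_congr rfl fun i _ => ?_
  rw [← aux_fd_lin hR (aux_diff (aux_smooth_partial hR hf _))
    (aux_diff (aux_smooth_partial hR hg _)) c hx]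
  have key : ∀ y ∈ closedBall (0 : E) R,
      fderivWithin ℝ (fun y => f y + c * g y) (closedBall 0 R) y (EuclideanSpace.single i 1) =
      fderivWithin ℝ f (closedBall 0 R) y (EuclideanSpace.single i 1) +
        c * fderivWithin ℝ g (closedBall 0 R) y (EuclideanSpace.single i 1) :=
    fun y hy => aux_fd_lin hR (aux_diff hf) (aux_diff hg) c hy _
  rw [fderivWithin_congr key (key x hx)]

/-- Second-order condition in one variable. -/
lemma aux_second {φ ψ : ℝ → ℝ} {a : ℝ} (h1 : ∀ t ∈ Icc (0 : ℝ) 1,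
      HasDerivWithinAt φ (ψ t) (Icc 0 1) t)
    (h2 : HasDerivWithinAt ψ a (Icc 0 1) 0) (h0 : ψ 0 = 0)
    (hmax : ∀ t ∈ Icc (0 : ℝ) 1, φ t ≤ φ 0) : a ≤ 0 := by
  by_contra! ha
  have h3 := (hasDerivWithinAt_iff_tendsto_slope.1 h2).eventually (lt_mem_nhds ha)
  rw [Filter.Eventually, mem_nhdsWithin] at h3
  obtain ⟨U, hU, h0U, hUs⟩ := h3
  obtain ⟨δ, hδ, hδU⟩ := Metric.isOpen_iff.1 hU 0 h0U
  set η := min (δ / 2) 1 with hη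
  have hη0 : 0 < η := by positivity
  have hη1 : η ≤ 1 := min_le_right _ _
  have hηδ : η < δ := lt_of_le_of_lt (min_le_left _ _) (by linarith)
  have hpos : ∀ t ∈ Ioo (0 : ℝ) η, 0 < ψ t := by
    intro t ht
    have hs : 0 < slope ψ 0 t := hUs ⟨hδU (by
      rw [Metric.mem_ball, Real.dist_eq, sub_zero, abs_of_pos ht.1]; linarith [ht.2]),
      ⟨⟨ht.1.le, by linarith [ht.2]⟩, by simpa using ht.1.ne'⟩⟩
    rw [slope_def_field, h0, sub_zero, sub_zero] at hs
    exact (div_pos_iff_of_pos_right ht.1).1 hs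
  have hsub : Icc (0 : ℝ) η ⊆ Icc 0 1 := Icc_subset_Icc le_rfl hη1
  have hmono : StrictMonoOn φ (Icc 0 η) := by
    apply strictMonoOn_of_deriv_pos (convex_Icc _ _)
    · intro t ht
      exact ((h1 t (hsub ht)).continuousWithinAt).mono hsub
    · intro t ht
      rw [interior_Icc] at ht
      have := (h1 t (hsub ⟨ht.1.le, ht.2.le⟩)).hasDerivAt
        (Icc_mem_nhds ht.1 (by linarith [ht.2]))
      rw [this.deriv]
      exact hpos t ht
  have := hmono ⟨le_rfl, hη0.le⟩ ⟨hη0.le, le_rfl⟩ hη0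
  have := hmax η ⟨hη0.le, hη1⟩
  linarith

/-- At a critical maximum point over the closed ball the Laplacian is nonpositive. -/
lemma aux_max {R : ℝ} (hR : 0 < R) {u : E → ℝ}
    (hu : ContDiffOn ℝ (⊤ : ℕ∞) u (closedBall 0 R))
    (hb : ∀ x : E, ‖x‖ = R → fderivWithin ℝ u (closedBall 0 R) x (‖x‖⁻¹ • x) = 0)
    {x : E} (hx : x ∈ closedBall (0 : E) R) (hmax : ∀ y ∈ closedBall (0 : E) R, u y ≤ u x) :
    lapWithin (closedBall 0 R) u x ≤ 0 := by
  set S := closedBall (0 : E) R with hS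
  have hconv : Convex ℝ S := convex_closedBall _ _
  have hd : DifferentiableOn ℝ u S := aux_diff hu
  have hseg : ∀ y ∈ S, ∀ t ∈ Icc (0 : ℝ) 1, x + t • (y - x) ∈ S := fun y hy t ht =>
    hconv.add_smul_sub_mem hx hy ht
  -- gradient vanishes
  have hgrad : fderivWithin ℝ u S x = 0 := by
    have hmaxOn : IsLocalMaxOn u S x := by
      filter_upwards [self_mem_nhdsWithin] with y hy using hmax y hy
    rcases (mem_closedBall_zero_iff.1 hx).lt_or_eq with hlt | heq
    · have hn : S ∈ nhds x := closedBall_mem_nhds_of_mem (by simpa using hlt)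
      rw [fderivWithin_of_mem_nhds hn]
      exact (hmaxOn.isLocalMax hn).fderiv_eq_zero
    · have hxx : fderivWithin ℝ u S x x = 0 := by
        have := hb x heq
        rw [map_smul, smul_eq_mul, heq] at this
        exact (mul_eq_zero.1 this).resolve_left (inv_ne_zero hR.ne')
      have hle : ∀ y ∈ S, fderivWithin ℝ u S x y ≤ 0 := by
        intro y hy
        have h := hmaxOn.hasFDerivWithinAt_nonpos (hd x hx).hasFDerivWithinAt
          (y := y - x) (sub_mem_posTangentConeAt_of_segment_subset (hconv.segment_subset hx hy))
        rw [map_sub, hxx, sub_zero] at h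
        exact h
      have hz : ∀ y ∈ S, fderivWithin ℝ u S x y = 0 := by
        intro y hy
        apply le_antisymm (hle y hy)
        have := hle (-y) (by simpa [hS] using hy)
        rw [map_neg] at this
        linarith
      ext d
      have h := hz ((R / (‖d‖ + 1)) • d) (by
        rw [hS, mem_closedBall_zero_iff, norm_smul, Real.norm_of_nonneg (by positivity),
          div_mul_eq_mul_div, div_le_iff₀ (by positivity)]
        nlinarith [norm_nonneg d])
      rw [map_smul, smul_eq_mul] at h
      have : R / (‖d‖ + 1) ≠ 0 := by positivity
      simpa using (mul_eq_zero.1 h).resolve_left this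
  have hF : DifferentiableOn ℝ (fderivWithin ℝ u S) S :=
    (hu.fderivWithin (m := (⊤ : ℕ∞)) (aux_ud hR) (by simp)).differentiableOn (by simp)
  set G := fderivWithin ℝ (fderivWithin ℝ u S) S x with hG
  have hGd : HasFDerivWithinAt (fderivWithin ℝ u S) G S x := (hF x hx).hasFDerivWithinAt
  have hQ : ∀ y ∈ S, G (y - x) (y - x) ≤ 0 := by
    intro y hy
    set d := y - x with hdd
    have hline : ∀ t : ℝ, HasDerivWithinAt (fun t : ℝ => x + t • d) d (Icc 0 1) t := by
      intro t
      have := ((hasDerivAt_id t).smul_const d).const_add x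
      simpa using this.hasDerivWithinAt
    have hmaps : MapsTo (fun t : ℝ => x + t • d) (Icc 0 1) S := fun t ht => hseg y hy t ht
    refine aux_second (φ := fun t => u (x + t • d))
      (ψ := fun t => fderivWithin ℝ u S (x + t • d) d) ?_ ?_ ?_ ?_
    · intro t ht
      exact (hd _ (hmaps ht)).hasFDerivWithinAt.comp_hasDerivWithinAt t (hline t) hmaps
    · have h1 : HasFDerivWithinAt (fderivWithin ℝ u S) G S (x + (0 : ℝ) • d) := by
        simpa using hGd
      have h2 := h1.comp_hasDerivWithinAt (0 : ℝ) (hline 0) hmaps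
      have h3 := h2.clm_apply (hasDerivWithinAt_const (0 : ℝ) (Icc 0 1) d)
      simpa using h3
    · simp [hgrad]
    · intro t ht
      simpa using hmax _ (hmaps ht)
  have hhalf : ∀ e : E, ‖e‖ = 1 → inner ℝ x e ≤ 0 → G e e ≤ 0 := by
    intro e he hxe
    have hε : ∀ ε : ℝ, 0 < ε → G (e - ε • x) (e - ε • x) ≤ 0 := by
      intro ε hε
      set t := min (1 / ε) (ε * R ^ 2) with ht
      have ht0 : 0 < t := by positivity
      have ht1 : t * ε ≤ 1 := by
        have : t ≤ 1 / ε := min_le_left _ _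
        rwa [le_div_iff₀ hε] at this
      have ht2 : t ≤ ε * R ^ 2 := min_le_right _ _
      have hmem : x + t • (e - ε • x) ∈ S := by
        rw [hS, mem_closedBall_zero_iff]
        apply le_of_sq_le_sq _ hR.le
        have hxn : ‖x‖ ≤ R := mem_closedBall_zero_iff.1 hx
        have hxn2 : ‖x‖ ^ 2 ≤ R ^ 2 := by gcongr
        have e1 : x + t • (e - ε • x) = (1 - t * ε) • x + t • e := by module
        rw [e1, norm_add_sq_real, norm_smul, norm_smul, he, inner_smul_left, inner_smul_right,
          mul_pow, mul_pow, Real.norm_eq_abs, Real.norm_eq_abs, sq_abs, sq_abs]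
        simp only [conj_trivial]
        have a1 : 0 ≤ 1 - t * ε := by linarith
        have a2 : (1 - t * ε) * (t * inner ℝ x e) ≤ 0 :=
          mul_nonpos_of_nonneg_of_nonpos a1 (mul_nonpos_of_nonneg_of_nonpos ht0.le hxe)
        have a3 : (1 - t * ε) ^ 2 * ‖x‖ ^ 2 ≤ (1 - t * ε) * R ^ 2 := by
          have : (1 - t * ε) ^ 2 ≤ 1 - t * ε := by nlinarith [mul_pos ht0 hε]
          gcongr
        have a4 : t ^ 2 ≤ t * ε * R ^ 2 := by nlinarith
        nlinarith
      have h := hQ _ hmem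
      rw [add_sub_cancel_left, map_smul, map_smul, smul_eq_mul, ContinuousLinearMap.smul_apply,
        smul_eq_mul, ← mul_assoc] at h
      exact nonpos_of_mul_nonpos_right h (by positivity)
    have hc : Continuous fun ε : ℝ => G (e - ε • x) (e - ε • x) := by fun_prop
    have hlim : Filter.Tendsto (fun ε : ℝ => G (e - ε • x) (e - ε • x))
        (nhdsWithin 0 (Ioi 0)) (nhds (G e e)) := by
      have := hc.tendsto 0
      simp only [zero_smul, sub_zero] at this
      exact this.mono_left nhdsWithin_le_nhds
    refine le_of_tendsto hlim ?_
    filter_upwards [self_mem_nhdsWithin] with ε h using hε ε h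
  have hall : ∀ e : E, ‖e‖ = 1 → G e e ≤ 0 := by
    intro e he
    rcases le_total (inner ℝ x e) 0 with h | h
    · exact hhalf e he h
    · have := hhalf (-e) (by simpa using he) (by rw [inner_neg_right]; linarith)
      simpa using this
  unfold lapWithin
  apply Finset.sum_nonpos
  intro i _
  have h := (hGd.clm_apply (hasFDerivWithinAt_const (EuclideanSpace.single i (1 : ℝ)) x S)).fderivWithin
    (aux_ud hR x hx)
  rw [h]
  have := hall (EuclideanSpace.single i 1) (by simp)
  simpa using this

lemma aux_nonpos {R : ℝ} (hR : 0 < R) {u : E → ℝ} {c : ℝ} (hc : 0 < c)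
    (hu : ContDiffOn ℝ (⊤ : ℕ∞) u (closedBall 0 R))
    (hb : ∀ x : E, ‖x‖ = R → fderivWithin ℝ u (closedBall 0 R) x (‖x‖⁻¹ • x) = 0)
    (hl : ∀ x ∈ closedBall (0 : E) R, lapWithin (closedBall 0 R) u x = c * u x) :
    ∀ x ∈ closedBall (0 : E) R, u x ≤ 0 := by
  obtain ⟨x, hx, hmax⟩ := (isCompact_closedBall (0 : E) R).exists_isMaxOn
    ⟨0, by simp [hR.le]⟩ hu.continuousOn
  have h := aux_max hR hu hb hx hmax
  rw [hl x hx] at h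
  have h0 : u x ≤ 0 := nonpos_of_mul_nonpos_right h hc
  exact fun y hy => (hmax hy).trans h0

end helpers

/-- **The first nonzero Neumann eigenvalue of `Δ²` on a ball is the square of that of `Δ`.**
For `n ≥ 2` and `R > 0`, `Υ₁(B_R(0)) = μ₁(B_R(0))²`. -/
theorem first_biharmonic_neumann_eigenvalue_ball {n : ℕ} (hn : 2 ≤ n) (R : ℝ) (hR : 0 < R)
    (μ₁ Υ₁ : ℝ)
    (hμ : IsLeast {μ : ℝ | 0 < μ ∧ IsLapNeumannEigenvalueBall n R μ} μ₁)
    (hΥ : IsLeast {Υ : ℝ | 0 < Υ ∧ IsBiLapNeumannEigenvalueBall n R Υ} Υ₁) :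
    Υ₁ = μ₁ ^ 2 := by
  have hnorm : ∀ x : EuclideanSpace ℝ (Fin n), ‖x‖ = R → x ∈ closedBall (0 : EuclideanSpace ℝ (Fin n)) R :=
    fun x hx => mem_closedBall_zero_iff.2 hx.le
  apply le_antisymm
  · apply hΥ.2
    obtain ⟨⟨hpos, u, hu, hne, heq, hb⟩, -⟩ := hμ
    refine ⟨by positivity, u, hu, hne, ?_, hb, ?_⟩
    all_goals
      have hcl : ∀ x ∈ closedBall (0 : EuclideanSpace ℝ (Fin n)) R,
          lapWithin (closedBall 0 R) u x = u x + (-μ₁ - 1) * u x := by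
        refine aux_closure hR (aux_smooth_lap hR hu).continuousOn
          (hu.continuousOn.add (continuousOn_const.mul hu.continuousOn)) ?_
        intro x hx
        rw [heq x hx]; ring
    · intro x hx
      have hx' := ball_subset_closedBall hx
      rw [aux_lap_congr hcl x hx', aux_lap_lin hR hu hu _ hx', heq x hx]
      ring
    · intro x hx
      rw [fderivWithin_congr hcl (hcl x (hnorm x hx)),
        aux_fd_lin hR (aux_diff hu) (aux_diff hu) _ (hnorm x hx), hb x hx]
      ring
  · obtain ⟨⟨hpos, u, hu, hne, heq, hb, hb2⟩, -⟩ := hΥ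
    set c := Real.sqrt Υ₁ with hc
    have hc0 : 0 < c := Real.sqrt_pos.2 hpos
    have hc2 : c ^ 2 = Υ₁ := Real.sq_sqrt hpos.le
    have hlap := aux_smooth_lap hR hu
    have hμpos := hμ.1.1
    suffices h : μ₁ ≤ c by
      rw [← hc2]
      gcongr
    apply hμ.2
    refine ⟨hc0, fun y => lapWithin (closedBall 0 R) u y + (-c) * u y, ?_, ?_, ?_, ?_⟩
    · exact hlap.add (contDiffOn_const.mul hu)
    · by_contra! hzero
      have hl : ∀ x ∈ closedBall (0 : EuclideanSpace ℝ (Fin n)) R,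
          lapWithin (closedBall 0 R) u x = c * u x := fun x hx => by linarith [hzero x hx]
      have h1 := aux_nonpos hR hc0 hu hb hl
      have h2 := aux_nonpos (u := fun y => u y + (-2) * u y) hR hc0
        (hu.add (contDiffOn_const.mul hu))
        (fun x hx => by
          rw [aux_fd_lin hR (aux_diff hu) (aux_diff hu) _ (hnorm x hx), hb x hx]; ring)
        (fun x hx => by
          rw [aux_lap_lin hR hu hu _ hx, hl x hx]; ring)
      obtain ⟨x, hx, hxne⟩ := hne
      exact hxne (by linarith [h1 x hx, h2 x hx])
    · intro x hx
      rw [aux_lap_lin hR hlap hu _ (ball_subset_closedBall hx), heq x hx, ← hc2]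
      ring
    · intro x hx
      rw [aux_fd_lin hR (aux_diff hlap) (aux_diff hu) _ (hnorm x hx), hb x hx, hb2 x hx]
      ring
end
end

section
/- Let n ≥ 2, m ≥ 1, R > 0, and let B_R(0) be the open ball of radius R centered at the origin in ℝⁿ. Then the first nonzero Neumann eigenvalue of the even-multi-Laplacian operator Δ^{2m} on the ball equals the 2m-th power of the first nonzero Neumann eigenvalue of the Laplacian on the ball: Υ̂₁(B_R(0)) = μ₁(B_R(0))^{2m}. -/
open MeasureTheory Set Metric

noncomputable section

local notation "EE" n => EuclideanSpace ℝ (Fin n)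

lemma aux_uniqueDiff {n : ℕ} {R : ℝ} (hR : 0 < R) :
    UniqueDiffOn ℝ (closedBall (0 : EE n) R) := by
  apply uniqueDiffOn_convex (convex_closedBall _ _)
  rw [interior_closedBall _ hR.ne']
  exact ⟨0, mem_ball_self hR⟩

lemma aux_cut_int {n : ℕ} {R r : ℝ} (hR : 0 < R) (hr : r < R) (φ f : (EE n) → ℝ)
    (hφ : ContDiff ℝ 1 φ) (hφ0 : ∀ x, x ∉ closedBall (0 : EE n) r → φ x = 0)
    (hf : ContDiffOn ℝ 1 f (closedBall (0 : EE n) R)) (e : EE n) :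
    (Integrable (fun x => φ x * fderivWithin ℝ f (closedBall (0 : EE n) R) x e + fderiv ℝ φ x e * f x)
      (volume.restrict (ball (0 : EE n) R))) ∧
    ∫ x in ball (0 : EE n) R,
      (φ x * fderivWithin ℝ f (closedBall (0 : EE n) R) x e + fderiv ℝ φ x e * f x) = 0 := by
  set g : (EE n) → ℝ := fun x => φ x * f x with hgdef
  have hfat : ∀ x ∈ ball (0 : EE n) R, ContDiffAt ℝ 1 f x := fun x hx =>
    hf.contDiffAt (Filter.mem_of_superset (isOpen_ball.mem_nhds hx) ball_subset_closedBall)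
  have hout : ∀ x, x ∉ ball (0 : EE n) R → g =ᶠ[nhds x] fun _ => 0 := by
    intro x hx
    have : (closedBall (0 : EE n) r)ᶜ ∈ nhds x := by
      apply isClosed_closedBall.isOpen_compl.mem_nhds
      intro h
      exact hx (closedBall_subset_ball hr h)
    filter_upwards [this] with y hy
    simp [hgdef, hφ0 y hy]
  have hg : ContDiff ℝ 1 g := by
    rw [contDiff_iff_contDiffAt]
    intro x
    by_cases hx : x ∈ ball (0 : EE n) R
    · exact hφ.contDiffAt.mul (hfat x hx)
    · exact contDiffAt_const.congr_of_eventuallyEq (hout x hx)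
  have hgc : HasCompactSupport g := by
    apply HasCompactSupport.intro (isCompact_closedBall (0 : EE n) r)
    intro x hx
    simp [hgdef, hφ0 x hx]
  have hg'c : Continuous fun x => fderiv ℝ g x e :=
    (hg.continuous_fderiv one_ne_zero).clm_apply continuous_const
  have hg's : HasCompactSupport fun x => fderiv ℝ g x e := hgc.fderiv_apply (𝕜 := ℝ) e
  have hint : Integrable (fun x => fderiv ℝ g x e) := hg'c.integrable_of_hasCompactSupport hg's
  have h0 : ∫ x, fderiv ℝ g x e = 0 := by
    have := integral_mul_fderiv_eq_neg_fderiv_mul_of_integrable (μ := (volume : Measure (EE n)))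
      (f := fun _ : EE n => (1 : ℝ)) (g := g) (v := e) (by simp) (by simpa using hint)
      (by simpa using hg.continuous.integrable_of_hasCompactSupport hgc)
      (fun x _ => differentiableAt_const _)
      (fun x _ => (hg.differentiable one_ne_zero) x)
    simpa using this
  have heq : EqOn (fun x => φ x * fderivWithin ℝ f (closedBall (0 : EE n) R) x e
      + fderiv ℝ φ x e * f x) (fun x => fderiv ℝ g x e) (ball (0 : EE n) R) := by
    intro x hx
    have hnh : closedBall (0 : EE n) R ∈ nhds x :=
      Filter.mem_of_superset (isOpen_ball.mem_nhds hx) ball_subset_closedBall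
    have := fderiv_fun_mul (hφ.differentiable one_ne_zero x)
      ((hfat x hx).differentiableAt one_ne_zero)
    simp only [hgdef]
    rw [this, fderivWithin_of_mem_nhds hnh]
    simp
    ring
  constructor
  · exact (integrableOn_congr_fun heq measurableSet_ball).2 hint.integrableOn
  · rw [setIntegral_congr_fun measurableSet_ball heq, ← h0]
    apply setIntegral_eq_integral_of_forall_compl_eq_zero
    intro x hx
    rw [(hout x hx).fderiv_eq]
    simp

lemma aux_st_bound : ∃ M : ℝ, ∀ t : ℝ, |deriv Real.smoothTransition t * (t + 1)| ≤ M := by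
  have hc : Continuous fun t : ℝ => deriv Real.smoothTransition t * (t + 1) := by
    have := (Real.smoothTransition.contDiff (n := 1)).continuous_deriv le_rfl
    fun_prop
  have hs : HasCompactSupport fun t : ℝ => deriv Real.smoothTransition t * (t + 1) := by
    apply HasCompactSupport.intro (isCompact_Icc (a := (0 : ℝ)) (b := 1))
    intro t ht
    have : deriv Real.smoothTransition t = 0 := by
      rw [mem_Icc, not_and_or, not_le, not_le] at ht
      rcases ht with ht | ht
      · have : Real.smoothTransition =ᶠ[nhds t] fun _ => 0 := by
          filter_upwards [Iio_mem_nhds ht] with y hy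
          exact Real.smoothTransition.zero_of_nonpos (le_of_lt hy)
        rw [this.deriv_eq]; simp
      · have : Real.smoothTransition =ᶠ[nhds t] fun _ => 1 := by
          filter_upwards [Ioi_mem_nhds ht] with y hy
          exact Real.smoothTransition.one_of_one_le (le_of_lt hy)
        rw [this.deriv_eq]; simp
    simp [this]
  obtain ⟨M, hM⟩ := hs.exists_bound_of_continuous hc
  exact ⟨M, hM⟩

lemma aux_st_deriv {t : ℝ} (ht : 1 < t) : deriv Real.smoothTransition t = 0 := by
  have : Real.smoothTransition =ᶠ[nhds t] fun _ => 1 := by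
    filter_upwards [Ioi_mem_nhds ht] with y hy
    exact Real.smoothTransition.one_of_one_le (le_of_lt hy)
  rw [this.deriv_eq]; simp

/-- linear vanishing at the boundary -/
lemma aux_boundary {n : ℕ} {R : ℝ} (hR : 0 < R) (h : (EE n) → ℝ)
    (hh : ContDiffOn ℝ 1 h (closedBall (0 : EE n) R)) (h0 : ∀ x, ‖x‖ = R → h x = 0) :
    ∃ C : ℝ, 0 ≤ C ∧ ∀ x ∈ ball (0 : EE n) R, x ≠ 0 → |h x| ≤ C * (R - ‖x‖) := by
  have hU := aux_uniqueDiff (n := n) hR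
  have hc : ContinuousOn (fderivWithin ℝ h (closedBall (0 : EE n) R)) (closedBall (0 : EE n) R) :=
    hh.continuousOn_fderivWithin hU le_rfl
  obtain ⟨C, hC⟩ := (isCompact_closedBall (0 : EE n) R).exists_bound_of_continuousOn hc
  refine ⟨C, (norm_nonneg _).trans (hC 0 (mem_closedBall_self hR.le)), ?_⟩
  intro x hx hx0
  have hxn : 0 < ‖x‖ := norm_pos_iff.2 hx0
  have hxR : ‖x‖ < R := by simpa using hx
  have hy : ‖(R / ‖x‖) • x‖ = R := by
    rw [norm_smul, Real.norm_of_nonneg (by positivity)]; field_simp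
  have := Convex.norm_image_sub_le_of_norm_fderivWithin_le (hh.differentiableOn one_ne_zero) hC
    (convex_closedBall _ _) (x := (R / ‖x‖) • x) (y := x) (by simp [hy]) (ball_subset_closedBall hx)
  rw [h0 _ hy, sub_zero] at this
  have h2 : ‖x - (R / ‖x‖) • x‖ = R - ‖x‖ := by
    have : x - (R / ‖x‖) • x = (1 - R / ‖x‖) • x := by rw [sub_smul, one_smul]
    rw [this, norm_smul, Real.norm_eq_abs, abs_of_neg]
    · field_simp; ring
    · rw [sub_neg, lt_div_iff₀ hxn]; linarith
  rw [h2] at this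
  exact this

lemma aux_div {n : ℕ} {R : ℝ} (hR : 0 < R) (F : Fin n → (EE n) → ℝ)
    (hF : ∀ i, ContDiffOn ℝ 1 (F i) (closedBall (0 : EE n) R))
    (h0 : ∀ x : EE n, ‖x‖ = R → ∑ i, x i * F i x = 0) :
    ∫ x in ball (0 : EE n) R,
      ∑ i, fderivWithin ℝ (F i) (closedBall (0 : EE n) R) x (EuclideanSpace.single i 1) = 0 := by
  classical
  have hU := aux_uniqueDiff (n := n) hR
  set K := closedBall (0 : EE n) R with hK
  set D : (EE n) → ℝ := fun x => ∑ i, fderivWithin ℝ (F i) K x (EuclideanSpace.single i 1) with hD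
  set H : (EE n) → ℝ := fun x => ∑ i, x i * F i x with hH
  have hHc : ContDiffOn ℝ 1 H K := by
    apply ContDiffOn.sum
    intro i _
    exact ContDiffOn.mul (by fun_prop) (hF i)
  obtain ⟨C, hC0, hC⟩ := aux_boundary hR H hHc h0
  obtain ⟨M, hM⟩ := aux_st_bound
  have hDc : ContinuousOn D K := by
    apply continuousOn_finsetSum
    intro i _
    exact ((hF i).continuousOn_fderivWithin hU le_rfl).clm_apply continuousOn_const
  obtain ⟨B, hB⟩ := (isCompact_closedBall (0 : EE n) R).exists_bound_of_continuousOn hDc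
  let φ : ℕ → (EE n) → ℝ := fun k x => Real.smoothTransition (((k : ℝ) + 1) * (R ^ 2 - ‖x‖ ^ 2) - 1)
  have hφc : ∀ k, ContDiff ℝ 1 (φ k) := by
    intro k
    apply (Real.smoothTransition.contDiff (n := 1)).comp
    exact (contDiff_const.mul (contDiff_const.sub (contDiff_norm_sq ℝ))).sub contDiff_const
  have hφd : ∀ k x v, fderiv ℝ (φ k) x v =
      deriv Real.smoothTransition (((k : ℝ) + 1) * (R ^ 2 - ‖x‖ ^ 2) - 1) *
        (-2 * ((k : ℝ) + 1) * inner ℝ x v) := by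
    intro k x v
    have h1 :=
      (((hasStrictFDerivAt_norm_sq x).hasFDerivAt.const_sub (R ^ 2)).const_mul ((k : ℝ) + 1)).sub_const 1
    have h2 : HasDerivAt Real.smoothTransition
        (deriv Real.smoothTransition (((k : ℝ) + 1) * (R ^ 2 - ‖x‖ ^ 2) - 1))
        (((k : ℝ) + 1) * (R ^ 2 - ‖x‖ ^ 2) - 1) :=
      ((Real.smoothTransition.contDiff (n := 1)).differentiable one_ne_zero _).hasDerivAt
    have := h2.comp_hasFDerivAt x h1
    rw [show φ k = Real.smoothTransition ∘ (fun x : EE n => ((k : ℝ) + 1) * (R ^ 2 - ‖x‖ ^ 2) - 1)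
      from rfl, this.fderiv]
    simp
    left
    ring
  let G : ℕ → (EE n) → ℝ := fun k x => φ k x * D x +
    deriv Real.smoothTransition (((k : ℝ) + 1) * (R ^ 2 - ‖x‖ ^ 2) - 1) *
        (-2 * ((k : ℝ) + 1) * H x)
  have hGeq : ∀ k, G k = fun x => ∑ i, (φ k x * fderivWithin ℝ (F i) K x (EuclideanSpace.single i 1)
      + fderiv ℝ (φ k) x (EuclideanSpace.single i 1) * F i x) := by
    intro k
    funext x
    simp only [G, hD, hH, hφd, Finset.sum_add_distrib, Finset.mul_sum]
    congr 1
    apply Finset.sum_congr rfl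
    intro i _
    simp [EuclideanSpace.inner_single_right]
    ring
  have hr : ∀ k : ℕ, √(R ^ 2 - 1 / ((k : ℝ) + 1)) < R := by
    intro k
    rw [Real.sqrt_lt' hR]
    have : 0 < 1 / ((k : ℝ) + 1) := by positivity
    linarith
  have hφ0 : ∀ k : ℕ, ∀ x, x ∉ closedBall (0 : EE n) (√(R ^ 2 - 1 / ((k : ℝ) + 1))) → φ k x = 0 := by
    intro k x hx
    apply Real.smoothTransition.zero_of_nonpos
    rw [mem_closedBall_zero_iff, not_le] at hx
    have h1 := (Real.sqrt_lt' (lt_of_le_of_lt (Real.sqrt_nonneg _) hx)).1 hx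
    have hk : 0 < (k : ℝ) + 1 := by positivity
    have h2 : ((k : ℝ) + 1) * (1 / ((k : ℝ) + 1)) = 1 := by field_simp
    nlinarith
  have hG : ∀ k, Integrable (G k) (volume.restrict (ball (0 : EE n) R)) ∧
      ∫ x in ball (0 : EE n) R, G k x = 0 := by
    intro k
    have := fun i => aux_cut_int hR (hr k) (φ k) (F i) (hφc k) (hφ0 k) (hF i)
      (EuclideanSpace.single i 1)
    rw [hGeq k]
    refine ⟨integrable_finsetSum _ fun i _ => (this i).1, ?_⟩
    rw [integral_finsetSum _ fun i _ => (this i).1]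
    exact Finset.sum_eq_zero fun i _ => (this i).2
  have hlim : Filter.Tendsto (fun k => ∫ x in ball (0 : EE n) R, G k x) Filter.atTop
      (nhds (∫ x in ball (0 : EE n) R, D x)) := by
    apply tendsto_integral_of_dominated_convergence (fun _ => B + 2 * C * M / R)
    · exact fun k => (hG k).1.aestronglyMeasurable
    · have : IsFiniteMeasure (volume.restrict (ball (0 : EE n) R)) :=
        ⟨by simpa using measure_ball_lt_top⟩
      exact integrable_const _
    · intro k
      rw [ae_restrict_iff' measurableSet_ball]
      refine Filter.Eventually.of_forall fun x hx => ?_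
      have hxR : ‖x‖ < R := by simpa using hx
      refine (norm_add_le _ _).trans (add_le_add ?_ ?_)
      · rw [norm_mul]
        have h1 : ‖φ k x‖ ≤ 1 := by
          rw [Real.norm_of_nonneg (Real.smoothTransition.nonneg _)]
          exact Real.smoothTransition.le_one _
        have h2 := hB x (ball_subset_closedBall hx)
        nlinarith [norm_nonneg (D x), norm_nonneg (φ k x)]
      · have hHb : |H x| ≤ C * ((R ^ 2 - ‖x‖ ^ 2) / R) := by
          have h3 : R - ‖x‖ ≤ (R ^ 2 - ‖x‖ ^ 2) / R := by
            rw [le_div_iff₀ hR]; nlinarith [norm_nonneg x]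
          by_cases hx0 : x = 0
          · subst hx0
            simp [hH]
            positivity
          · exact (hC x hx hx0).trans (mul_le_mul_of_nonneg_left h3 hC0)
        have hMx := hM (((k : ℝ) + 1) * (R ^ 2 - ‖x‖ ^ 2) - 1)
        set d := deriv Real.smoothTransition (((k : ℝ) + 1) * (R ^ 2 - ‖x‖ ^ 2) - 1)
        have hk : 0 < (k : ℝ) + 1 := by positivity
        have hp : 0 < R ^ 2 - ‖x‖ ^ 2 := by nlinarith [norm_nonneg x]
        have e1 : ‖d * (-2 * ((k : ℝ) + 1) * H x)‖ = |d| * (2 * ((k : ℝ) + 1)) * |H x| := by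
          rw [Real.norm_eq_abs, abs_mul, abs_mul, abs_mul, abs_of_pos hk]; norm_num; ring
        have e2 : |d * (((k : ℝ) + 1) * (R ^ 2 - ‖x‖ ^ 2) - 1 + 1)|
            = |d| * (((k : ℝ) + 1) * (R ^ 2 - ‖x‖ ^ 2)) := by
          rw [sub_add_cancel, abs_mul, abs_of_pos (mul_pos hk hp)]
        rw [e2] at hMx
        rw [e1]
        calc |d| * (2 * ((k : ℝ) + 1)) * |H x|
            ≤ |d| * (2 * ((k : ℝ) + 1)) * (C * ((R ^ 2 - ‖x‖ ^ 2) / R)) := by gcongr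
          _ = 2 * C / R * (|d| * (((k : ℝ) + 1) * (R ^ 2 - ‖x‖ ^ 2))) := by ring
          _ ≤ 2 * C / R * M := by gcongr
          _ = 2 * C * M / R := by ring
    · rw [ae_restrict_iff' measurableSet_ball]
      refine Filter.Eventually.of_forall fun x hx => ?_
      have hxR : ‖x‖ < R := by simpa using hx
      have hp : 0 < R ^ 2 - ‖x‖ ^ 2 := by nlinarith [norm_nonneg x]
      apply tendsto_const_nhds.congr'
      obtain ⟨N, hN⟩ := exists_nat_gt (2 / (R ^ 2 - ‖x‖ ^ 2))
      filter_upwards [Filter.eventually_ge_atTop N] with k hk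
      have hkN : (N : ℝ) ≤ k := by exact_mod_cast hk
      rw [div_lt_iff₀ hp] at hN
      have ht : 1 < ((k : ℝ) + 1) * (R ^ 2 - ‖x‖ ^ 2) - 1 := by nlinarith
      simp only [G, φ]
      rw [aux_st_deriv ht, Real.smoothTransition.one_of_one_le ht.le]
      simp
  have h00 : (fun k => ∫ x in ball (0 : EE n) R, G k x) = fun _ => 0 := funext fun k => (hG k).2
  rw [h00] at hlim
  exact (tendsto_nhds_unique hlim tendsto_const_nhds)

lemma aux_D_smooth {n : ℕ} {R : ℝ} (hR : 0 < R) {f : (EE n) → ℝ}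
    (hf : ContDiffOn ℝ (⊤ : ℕ∞) f (closedBall (0 : EE n) R)) (e : EE n) :
    ContDiffOn ℝ (⊤ : ℕ∞) (fun y => fderivWithin ℝ f (closedBall (0 : EE n) R) y e)
      (closedBall (0 : EE n) R) :=
  (hf.fderivWithin (aux_uniqueDiff hR) (by norm_cast)).clm_apply contDiffOn_const

lemma aux_diff_s3 {n : ℕ} {R : ℝ} {f : (EE n) → ℝ}
    (hf : ContDiffOn ℝ (⊤ : ℕ∞) f (closedBall (0 : EE n) R)) {x : EE n}
    (hx : x ∈ closedBall (0 : EE n) R) :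
    DifferentiableWithinAt ℝ f (closedBall (0 : EE n) R) x :=
  hf.differentiableOn (by simp) x hx

lemma aux_lap_smooth {n : ℕ} {R : ℝ} (hR : 0 < R) {f : (EE n) → ℝ}
    (hf : ContDiffOn ℝ (⊤ : ℕ∞) f (closedBall (0 : EE n) R)) :
    ContDiffOn ℝ (⊤ : ℕ∞) (lapWithin (closedBall (0 : EE n) R) f) (closedBall (0 : EE n) R) := by
  unfold lapWithin
  exact ContDiffOn.sum fun i _ => aux_D_smooth hR (aux_D_smooth hR hf _) _

lemma aux_lap_out {n : ℕ} {R : ℝ} (f : (EE n) → ℝ) {x : EE n}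
    (hx : x ∉ closedBall (0 : EE n) R) : lapWithin (closedBall (0 : EE n) R) f x = 0 := by
  unfold lapWithin
  apply Finset.sum_eq_zero
  intro i _
  rw [fderivWithin_zero_of_notMem_closure (by rwa [isClosed_closedBall.closure_eq])]
  simp

lemma aux_lap_congr_s3 {n : ℕ} {R : ℝ} {f g : (EE n) → ℝ}
    (h : EqOn f g (closedBall (0 : EE n) R)) :
    lapWithin (closedBall (0 : EE n) R) f = lapWithin (closedBall (0 : EE n) R) g := by
  funext x
  by_cases hx : x ∈ closedBall (0 : EE n) R
  · unfold lapWithin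
    apply Finset.sum_congr rfl
    intro i _
    congr 1
    apply fderivWithin_congr'
    · intro y hy
      simp only
      rw [fderivWithin_congr' h hy]
    · exact hx
  · rw [aux_lap_out _ hx, aux_lap_out _ hx]

/-- Smooth functions on the closed ball, extended by zero. -/
def VV (n : ℕ) (R : ℝ) : Submodule ℝ ((EE n) → ℝ) where
  carrier := {f | ContDiffOn ℝ (⊤ : ℕ∞) f (closedBall (0 : EE n) R) ∧
    ∀ x, x ∉ closedBall (0 : EE n) R → f x = 0}
  add_mem' := by
    rintro f g ⟨hf, hf0⟩ ⟨hg, hg0⟩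
    exact ⟨hf.add hg, fun x hx => by simp [hf0 x hx, hg0 x hx]⟩
  zero_mem' := ⟨contDiffOn_const, fun x _ => rfl⟩
  smul_mem' := by
    rintro c f ⟨hf, hf0⟩
    exact ⟨hf.const_smul c, fun x hx => by simp [hf0 x hx]⟩

/-- The Laplacian as a linear endomorphism. -/
def LL (n : ℕ) {R : ℝ} (hR : 0 < R) : VV n R →ₗ[ℝ] VV n R where
  toFun f := ⟨lapWithin (closedBall 0 R) f, aux_lap_smooth hR f.2.1, fun _ hx => aux_lap_out _ hx⟩
  map_add' := by
    rintro ⟨f, hf, hf0⟩ ⟨g, hg, hg0⟩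
    ext x
    by_cases hx : x ∈ closedBall (0 : EE n) R
    · have hU := aux_uniqueDiff (n := n) hR
      simp only [lapWithin, Submodule.coe_add, Pi.add_apply, ← Finset.sum_add_distrib]
      apply Finset.sum_congr rfl
      intro i _
      have : EqOn (fun y => fderivWithin ℝ (f + g) (closedBall 0 R) y (EuclideanSpace.single i 1))
          (fun y => fderivWithin ℝ f (closedBall 0 R) y (EuclideanSpace.single i 1) +
            fderivWithin ℝ g (closedBall 0 R) y (EuclideanSpace.single i 1))
          (closedBall (0 : EE n) R) := by
        intro y hy
        simp only
        rw [fderivWithin_add (hU y hy) (aux_diff_s3 hf hy) (aux_diff_s3 hg hy)]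
        simp
      rw [fderivWithin_congr' this hx, fderivWithin_fun_add (hU x hx)
        (aux_diff_s3 (aux_D_smooth hR hf _) hx) (aux_diff_s3 (aux_D_smooth hR hg _) hx)]
      simp
    · simp [aux_lap_out _ hx]
  map_smul' := by
    rintro c ⟨f, hf, hf0⟩
    ext x
    by_cases hx : x ∈ closedBall (0 : EE n) R
    · have hU := aux_uniqueDiff (n := n) hR
      simp only [lapWithin, Submodule.coe_smul, Pi.smul_apply, Finset.smul_sum, RingHom.id_apply]
      apply Finset.sum_congr rfl
      intro i _
      have : EqOn (fun y => fderivWithin ℝ (c • f) (closedBall 0 R) y (EuclideanSpace.single i 1))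
          (fun y => c • fderivWithin ℝ f (closedBall 0 R) y (EuclideanSpace.single i 1))
          (closedBall (0 : EE n) R) := by
        intro y hy
        simp only
        rw [fderivWithin_const_smul (hU y hy) (aux_diff_s3 hf hy)]
        simp
      rw [fderivWithin_congr' this hx, fderivWithin_fun_const_smul (hU x hx)
        (aux_diff_s3 (aux_D_smooth hR hf _) hx)]
      simp
    · simp [aux_lap_out _ hx]

/-- Neumann functions. -/
def NN (n : ℕ) {R : ℝ} (hR : 0 < R) : Submodule ℝ (VV n R) where
  carrier := {f | ∀ x : EE n, ‖x‖ = R →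
    fderivWithin ℝ (f : (EE n) → ℝ) (closedBall 0 R) x (‖x‖⁻¹ • x) = 0}
  add_mem' := by
    rintro ⟨f, hf, hf0⟩ ⟨g, hg, hg0⟩ h1 h2 x hx
    have hxK : x ∈ closedBall (0 : EE n) R := by simp [hx]
    have := fderivWithin_add (aux_uniqueDiff (n := n) hR x hxK) (aux_diff_s3 hf hxK) (aux_diff_s3 hg hxK)
    have h1' := h1 x hx
    have h2' := h2 x hx
    simp only at h1' h2'
    simp only [Submodule.coe_add]
    rw [this, add_apply, h1', h2', add_zero]
  zero_mem' := by
    intro x hx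
    simp
  smul_mem' := by
    rintro c ⟨f, hf, hf0⟩ h1 x hx
    have hxK : x ∈ closedBall (0 : EE n) R := by simp [hx]
    have := fderivWithin_const_smul (aux_uniqueDiff (n := n) hR x hxK) (aux_diff_s3 hf hxK) c
    have h1' := h1 x hx
    simp only at h1'
    simp only [Submodule.coe_smul]
    rw [this, smul_apply, h1', smul_zero]

lemma aux_int {n : ℕ} {R : ℝ} {f : (EE n) → ℝ} (hf : ContinuousOn f (closedBall (0 : EE n) R)) :
    IntegrableOn f (ball (0 : EE n) R) :=
  (hf.integrableOn_compact (isCompact_closedBall _ _)).mono_set ball_subset_closedBall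

/-- The L² pairing. -/
def BB (n : ℕ) (R : ℝ) : VV n R →ₗ[ℝ] VV n R →ₗ[ℝ] ℝ :=
  LinearMap.mk₂ ℝ (fun f g => ∫ x in ball (0 : EE n) R, f.1 x * g.1 x)
    (by
      intro f g h
      simp only [Submodule.coe_add, Pi.add_apply, add_mul]
      exact integral_add (aux_int (f.2.1.continuousOn.mul h.2.1.continuousOn))
        (aux_int (g.2.1.continuousOn.mul h.2.1.continuousOn)))
    (by
      intro c f g
      simp only [Submodule.coe_smul, Pi.smul_apply, smul_eq_mul, mul_assoc]
      exact integral_const_mul _ _)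
    (by
      intro f g h
      simp only [Submodule.coe_add, Pi.add_apply, mul_add]
      exact integral_add (aux_int (f.2.1.continuousOn.mul g.2.1.continuousOn))
        (aux_int (f.2.1.continuousOn.mul h.2.1.continuousOn)))
    (by
      intro c f g
      simp only [Submodule.coe_smul, Pi.smul_apply, smul_eq_mul, mul_left_comm _ c]
      exact integral_const_mul _ _)

lemma BB_apply {n : ℕ} {R : ℝ} (f g : VV n R) :
    BB n R f g = ∫ x in ball (0 : EE n) R, f.1 x * g.1 x := rfl

lemma BB_symm {n : ℕ} {R : ℝ} (f g : VV n R) : BB n R f g = BB n R g f := by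
  simp only [BB_apply, mul_comm]

lemma BB_nonneg {n : ℕ} {R : ℝ} (f : VV n R) : 0 ≤ BB n R f f :=
  integral_nonneg fun x => mul_self_nonneg _

lemma BB_def {n : ℕ} {R : ℝ} (hR : 0 < R) (f : VV n R) (h : BB n R f f = 0) : f = 0 := by
  rw [BB_apply, integral_eq_zero_iff_of_nonneg (fun x => mul_self_nonneg _)
    (aux_int (f.2.1.continuousOn.mul f.2.1.continuousOn))] at h
  have h1 : EqOn (fun x => f.1 x * f.1 x) (fun _ => 0) (ball (0 : EE n) R) :=
    Measure.eqOn_open_of_ae_eq (μ := volume) h isOpen_ball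
      ((f.2.1.continuousOn.mul f.2.1.continuousOn).mono ball_subset_closedBall) continuousOn_const
  have h2 := h1.of_subset_closure (f.2.1.continuousOn.mul f.2.1.continuousOn)
    continuousOn_const ball_subset_closedBall (by rw [closure_ball _ hR.ne'])
  ext x
  by_cases hx : x ∈ closedBall (0 : EE n) R
  · simpa using h2 hx
  · simpa using f.2.2 x hx

lemma aux_green {n : ℕ} {R : ℝ} (hR : 0 < R) (f g : VV n R) (hg : g ∈ NN n hR) :
    BB n R f (LL n hR g) = - ∫ x in ball (0 : EE n) R, ∑ i,
      fderivWithin ℝ f.1 (closedBall 0 R) x (EuclideanSpace.single i 1) *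
      fderivWithin ℝ g.1 (closedBall 0 R) x (EuclideanSpace.single i 1) := by
  have hU := aux_uniqueDiff (n := n) hR
  have hle : (1 : WithTop ℕ∞) ≤ ((⊤ : ℕ∞) : WithTop ℕ∞) := by norm_cast
  have hdiv := aux_div hR (fun i x => f.1 x *
      fderivWithin ℝ g.1 (closedBall 0 R) x (EuclideanSpace.single i 1))
    (fun i => (f.2.1.mul (aux_D_smooth hR g.2.1 _)).of_le hle) (by
      intro x hx
      have h1 := hg x hx
      have h2 : ∑ i, x i * fderivWithin ℝ g.1 (closedBall 0 R) x (EuclideanSpace.single i 1)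
          = fderivWithin ℝ g.1 (closedBall 0 R) x x := by
        have h3 := congrArg (fderivWithin ℝ g.1 (closedBall 0 R) x)
          ((EuclideanSpace.basisFun (Fin n) ℝ).sum_repr x)
        rw [map_sum] at h3
        rw [← h3]
        apply Finset.sum_congr rfl
        intro i _
        rw [map_smul]
        simp
      rw [map_smul, hx, smul_eq_mul, mul_eq_zero, or_iff_right (inv_ne_zero hR.ne')] at h1
      rw [h1] at h2
      simp only [mul_left_comm _ (f.1 x), ← Finset.mul_sum, h2, mul_zero])
  rw [eq_neg_iff_add_eq_zero, BB_apply, ← integral_add, ← hdiv]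
  · apply setIntegral_congr_fun measurableSet_ball
    intro x hx
    have hxK := ball_subset_closedBall hx
    simp only [LL, LinearMap.coe_mk, AddHom.coe_mk, lapWithin, Finset.mul_sum,
      ← Finset.sum_add_distrib]
    apply Finset.sum_congr rfl
    intro i _
    rw [fderivWithin_fun_mul (hU x hxK) (aux_diff_s3 f.2.1 hxK) (aux_diff_s3 (aux_D_smooth hR g.2.1 _) hxK)]
    simp
    ring
  · exact aux_int (f.2.1.continuousOn.mul (LL n hR g).2.1.continuousOn)
  · apply aux_int
    exact continuousOn_finsetSum _ fun i _ => (aux_D_smooth hR f.2.1 _).continuousOn.mul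
      (aux_D_smooth hR g.2.1 _).continuousOn

lemma aux_sym {n : ℕ} {R : ℝ} (hR : 0 < R) (f g : VV n R) (hf : f ∈ NN n hR) (hg : g ∈ NN n hR) :
    BB n R (LL n hR f) g = BB n R f (LL n hR g) := by
  rw [BB_symm, aux_green hR f g hg, aux_green hR g f hf]
  simp only [mul_comm]

lemma aux_neg {n : ℕ} {R : ℝ} (hR : 0 < R) (f : VV n R) (hf : f ∈ NN n hR) :
    BB n R f (LL n hR f) ≤ 0 := by
  rw [aux_green hR f f hf, neg_nonpos]
  exact integral_nonneg fun x => Finset.sum_nonneg fun i _ => mul_self_nonneg _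

/-- the linear algebra core -/
lemma aux_core {n m : ℕ} {R : ℝ} (hR : 0 < R) (hm : 1 ≤ m) (lam : ℝ) (hlam : 0 < lam)
    (u : VV n R) (hu : u ≠ 0) (hN : ∀ j < 2 * m, (LL n hR ^ j) u ∈ NN n hR)
    (he : (LL n hR ^ (2 * m)) u = lam ^ (2 * m) • u) :
    ∃ v : VV n R, v ≠ 0 ∧ v ∈ NN n hR ∧ LL n hR v = (-lam) • v := by
  set L : Module.End ℝ (VV n R) := LL n hR with hL
  set Q : Module.End ℝ (VV n R) :=
    ∑ k ∈ Finset.range m, (lam ^ 2) ^ (m - 1 - k) • L ^ (2 * k) with hQ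
  have hQid : (L ^ 2 - (lam ^ 2) • 1) * Q = L ^ (2 * m) - lam ^ (2 * m) • 1 := by
    have hc : Commute (L ^ 2) ((lam ^ 2) • (1 : Module.End ℝ (VV n R))) :=
      (Commute.one_right _).smul_right _
    have := Commute.mul_geom_sum₂ (R := Module.End ℝ (VV n R)) hc m
    rw [← pow_mul, smul_pow, one_pow, ← pow_mul] at this
    rw [← this, hQ]
    congr 1
    apply Finset.sum_congr rfl
    intro k _
    rw [smul_pow, one_pow, mul_smul_comm, mul_one, pow_mul L]
  set w := Q u with hw
  have hwsum : w = ∑ k ∈ Finset.range m, (lam ^ 2) ^ (m - 1 - k) • (L ^ (2 * k)) u := by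
    simp [hw, hQ, LinearMap.sum_apply]
  have hwN : w ∈ NN n hR := by
    rw [hwsum]
    refine Submodule.sum_mem _ fun k hk => Submodule.smul_mem _ _ (hN _ ?_)
    have := Finset.mem_range.1 hk
    omega
  have hLwN : L w ∈ NN n hR := by
    rw [hwsum, map_sum]
    refine Submodule.sum_mem _ fun k hk => ?_
    rw [map_smul]
    refine Submodule.smul_mem _ _ ?_
    have := Finset.mem_range.1 hk
    have h2 := hN (2 * k + 1) (by omega)
    rwa [pow_succ', Module.End.mul_apply] at h2
  have hLLw : L (L w) = lam ^ 2 • w := by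
    have := congrArg (fun T => T u) hQid
    simp only [Module.End.mul_apply, LinearMap.sub_apply, LinearMap.smul_apply,
      Module.End.one_apply, he, sub_self, pow_two] at this
    rw [sub_eq_zero] at this
    rw [pow_two]
    exact this
  have hpow : ∀ k, ∀ b, k + b < 2 * m → BB n R ((L ^ k) u) ((L ^ b) u) = BB n R u ((L ^ (k + b)) u) := by
    intro k
    induction k with
    | zero => intro b _; simp
    | succ k ih =>
      intro b hb
      rw [pow_succ', Module.End.mul_apply, hL, aux_sym hR _ _ (hN k (by omega)) (hN b (by omega)),
        ← hL, ← Module.End.mul_apply, ← pow_succ']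
      rw [ih (b + 1) (by omega)]
      congr 3
      ring
  have hw0 : w ≠ 0 := by
    intro h0
    have h1 : BB n R u w = 0 := by rw [h0, map_zero]
    rw [hwsum, map_sum] at h1
    have h2 : ∀ k ∈ Finset.range m, 0 ≤ BB n R u ((lam ^ 2) ^ (m - 1 - k) • (L ^ (2 * k)) u) := by
      intro k hk
      have := Finset.mem_range.1 hk
      rw [map_smul, two_mul, ← hpow k k (by omega), smul_eq_mul]
      exact mul_nonneg (by positivity) (BB_nonneg _)
    have h3 := (Finset.sum_eq_zero_iff_of_nonneg h2).1 h1 0 (Finset.mem_range.2 (by omega))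
    rw [map_smul, smul_eq_mul, mul_eq_zero, or_iff_right (by positivity)] at h3
    exact hu (BB_def hR u (by simpa using h3))
  refine ⟨L w - lam • w, ?_, Submodule.sub_mem _ hLwN (Submodule.smul_mem _ _ hwN), ?_⟩
  · intro h0
    rw [sub_eq_zero] at h0
    have h1 := aux_neg hR w hwN
    rw [← hL, h0, map_smul, smul_eq_mul] at h1
    have h2 := BB_nonneg w
    exact hw0 (BB_def hR w (by nlinarith))
  · rw [map_sub, hLLw, map_smul]
    module

/-- extension by zero -/
def ext0 {n : ℕ} {R : ℝ} (u : (EE n) → ℝ)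
    (hu : ContDiffOn ℝ (⊤ : ℕ∞) u (closedBall (0 : EE n) R)) : VV n R :=
  ⟨(closedBall (0 : EE n) R).indicator u,
    hu.congr fun x hx => indicator_of_mem hx _, fun x hx => indicator_of_notMem hx _⟩

lemma ext0_eqOn {n : ℕ} {R : ℝ} (u : (EE n) → ℝ)
    (hu : ContDiffOn ℝ (⊤ : ℕ∞) u (closedBall (0 : EE n) R)) :
    EqOn (ext0 u hu).1 u (closedBall (0 : EE n) R) := fun x hx => indicator_of_mem hx _

lemma aux_iter {n : ℕ} {R : ℝ} (hR : 0 < R) (u : (EE n) → ℝ)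
    (v : VV n R) (huv : EqOn v.1 u (closedBall (0 : EE n) R)) (j : ℕ) :
    EqOn ((LL n hR ^ j) v).1 ((lapWithin (closedBall (0 : EE n) R))^[j] u)
      (closedBall (0 : EE n) R) := by
  induction j with
  | zero => simpa using huv
  | succ j ih =>
    rw [pow_succ', Module.End.mul_apply, Function.iterate_succ_apply']
    intro x _
    exact congrFun (aux_lap_congr_s3 ih) x

lemma aux_eq_of_ball {n : ℕ} {R : ℝ} (hR : 0 < R) (v w : VV n R)
    (h : ∀ x ∈ ball (0 : EE n) R, v.1 x = w.1 x) : v = w := by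
  have h2 : EqOn v.1 w.1 (closedBall (0 : EE n) R) :=
    Set.EqOn.of_subset_closure (s := ball (0 : EE n) R) h v.2.1.continuousOn
    w.2.1.continuousOn ball_subset_closedBall (by rw [closure_ball _ hR.ne'])
  ext x
  by_cases hx : x ∈ closedBall (0 : EE n) R
  · exact h2 hx
  · rw [v.2.2 x hx, w.2.2 x hx]

lemma aux_lap_iff {n : ℕ} {R μ : ℝ} (hR : 0 < R) :
    IsLapNeumannEigenvalueBall n R μ ↔
    ∃ v : VV n R, v ≠ 0 ∧ v ∈ NN n hR ∧ LL n hR v = (-μ) • v := by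
  constructor
  · rintro ⟨u, hu, ⟨x0, hx0, hne⟩, heq, hN⟩
    refine ⟨ext0 u hu, ?_, ?_, ?_⟩
    · intro h
      apply hne
      rw [← ext0_eqOn u hu hx0, h]; rfl
    · intro x hx
      have hxK : x ∈ closedBall (0 : EE n) R := by simp [hx]
      rw [fderivWithin_congr' (ext0_eqOn u hu) hxK]
      exact hN x hx
    · apply aux_eq_of_ball hR
      intro x hx
      have := aux_lap_congr_s3 (ext0_eqOn u hu)
      simp only [LL, LinearMap.coe_mk, AddHom.coe_mk, Submodule.coe_smul, Pi.smul_apply, smul_eq_mul]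
      rw [this, heq x hx, ext0_eqOn u hu (ball_subset_closedBall hx)]
  · rintro ⟨v, hv, hN, heq⟩
    refine ⟨v.1, v.2.1, ?_, ?_, hN⟩
    · by_contra! h
      apply hv
      apply aux_eq_of_ball hR
      intro x hx
      exact h x (ball_subset_closedBall hx)
    · intro x hx
      exact congrFun (congrArg Subtype.val heq) x

lemma aux_poly_iff {n m : ℕ} {R Υ : ℝ} (hR : 0 < R) :
    IsPolyLapNeumannEigenvalueBall n m R Υ ↔
    ∃ v : VV n R, v ≠ 0 ∧ (∀ j < 2 * m, (LL n hR ^ j) v ∈ NN n hR) ∧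
      (LL n hR ^ (2 * m)) v = Υ • v := by
  constructor
  · rintro ⟨u, hu, ⟨x0, hx0, hne⟩, heq, hN⟩
    refine ⟨ext0 u hu, ?_, ?_, ?_⟩
    · intro h
      apply hne
      rw [← ext0_eqOn u hu hx0, h]; rfl
    · intro j hj x hx
      have hxK : x ∈ closedBall (0 : EE n) R := by simp [hx]
      rw [fderivWithin_congr' (aux_iter hR u _ (ext0_eqOn u hu) j) hxK]
      exact hN j hj x hx
    · apply aux_eq_of_ball hR
      intro x hx
      have := aux_iter hR u _ (ext0_eqOn u hu) (2 * m) (ball_subset_closedBall hx)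
      rw [this, heq x hx, Submodule.coe_smul, Pi.smul_apply, smul_eq_mul,
        ext0_eqOn u hu (ball_subset_closedBall hx)]
  · rintro ⟨v, hv, hN, heq⟩
    have hit := aux_iter hR v.1 v (fun _ _ => rfl)
    refine ⟨v.1, v.2.1, ?_, ?_, ?_⟩
    · by_contra! h
      apply hv
      apply aux_eq_of_ball hR
      intro x hx
      exact h x (ball_subset_closedBall hx)
    · intro x hx
      rw [← hit (2 * m) (ball_subset_closedBall hx), heq]
      rfl
    · intro j hj x hx
      have hxK : x ∈ closedBall (0 : EE n) R := by simp [hx]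
      rw [← fderivWithin_congr' (hit j) hxK]
      exact hN j hj x hx

/-- **The first nonzero Neumann eigenvalue of `Δ^(2m)` on a ball is the `2m`-th power of that
of `Δ`.** For `n ≥ 2`, `m ≥ 1` and `R > 0`, `Υ̂₁(B_R(0)) = μ₁(B_R(0))^(2m)`. -/
theorem first_polyharmonic_neumann_eigenvalue_ball {n m : ℕ} (hn : 2 ≤ n) (hm : 1 ≤ m)
    (R : ℝ) (hR : 0 < R) (μ₁ Υ₁ : ℝ)
    (hμ : IsLeast {μ : ℝ | 0 < μ ∧ IsLapNeumannEigenvalueBall n R μ} μ₁)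
    (hΥ : IsLeast {Υ : ℝ | 0 < Υ ∧ IsPolyLapNeumannEigenvalueBall n m R Υ} Υ₁) :
    Υ₁ = μ₁ ^ (2 * m) := by
  obtain ⟨⟨hμ0, hμe⟩, hμl⟩ := hμ
  obtain ⟨⟨hΥ0, hΥe⟩, hΥl⟩ := hΥ
  apply le_antisymm
  · apply hΥl
    refine ⟨by positivity, ?_⟩
    rw [aux_poly_iff hR]
    obtain ⟨v, hv, hN, he⟩ := (aux_lap_iff hR).1 hμe
    have hp : ∀ j, (LL n hR ^ j) v = (-μ₁) ^ j • v := by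
      intro j
      induction j with
      | zero => simp
      | succ j ih =>
        rw [pow_succ', Module.End.mul_apply, ih, map_smul, he, smul_smul, pow_succ]
    refine ⟨v, hv, fun j _ => ?_, ?_⟩
    · rw [hp]; exact Submodule.smul_mem _ _ hN
    · rw [hp, Even.neg_pow (even_two_mul m)]
  · obtain ⟨v, hv, hN, he⟩ := (aux_poly_iff hR).1 hΥe
    obtain ⟨lam, hlam, hl⟩ : ∃ lam : ℝ, 0 < lam ∧ lam ^ (2 * m) = Υ₁ :=
      ⟨Υ₁ ^ (((2 * m : ℕ) : ℝ)⁻¹), Real.rpow_pos_of_pos hΥ0 _,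
        Real.rpow_inv_natCast_pow hΥ0.le (by omega)⟩
    rw [← hl] at he ⊢
    have h1 := hμl ⟨hlam, (aux_lap_iff hR).2 (aux_core hR hm lam hlam v hv hN he)⟩
    exact pow_le_pow_left₀ hμ0.le h1 _
end
end

section
/- Let n ≥ 2, m ≥ 1, R > 0, and let B_R(0) be the open ball of radius R centered at the origin in ℝⁿ. If u is a nonzero function, smooth on the closure of B_R(0), satisfying Δu = −μ₁(B_R(0))·u in B_R(0) and ∂u/∂n = 0 on ∂B_R(0) (i.e., u is a first nonzero Neumann eigenfunction of the Laplacian on the ball), then u satisfies Δ^{2m}u = Υ̂₁(B_R(0))·u in B_R(0) together with ∂(Δ^j u)/∂n = 0 on ∂B_R(0) for all j = 0, 1, …, 2m−1; that is, u is a Neumann eigenfunction of Δ^{2m} corresponding to its first nonzero Neumann eigenvalue Υ̂₁(B_R(0)). -/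
open MeasureTheory Set Metric

noncomputable section

local notation "𝔼" n => EuclideanSpace ℝ (Fin n)

lemma nb_uniq {n : ℕ} {R : ℝ} (hR : 0 < R) : UniqueDiffOn ℝ (closedBall (0 : 𝔼 n) R) := by
  refine uniqueDiffOn_convex (convex_closedBall _ _) ?_
  rw [interior_closedBall _ hR.ne']
  exact ⟨0, by simpa using hR⟩

lemma nb_D_smooth {n : ℕ} {R : ℝ} (hR : 0 < R) {f : (𝔼 n) → ℝ}
    (hf : ContDiffOn ℝ (⊤ : ℕ∞) f (closedBall 0 R)) (v : 𝔼 n) :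
    ContDiffOn ℝ (⊤ : ℕ∞) (fun x => fderivWithin ℝ f (closedBall 0 R) x v) (closedBall 0 R) := by
  have h := hf.fderivWithin (nb_uniq hR) (m := (⊤ : ℕ∞)) (by simp)
  exact h.clm_apply contDiffOn_const

lemma nb_lap_smooth {n : ℕ} {R : ℝ} (hR : 0 < R) {f : (𝔼 n) → ℝ}
    (hf : ContDiffOn ℝ (⊤ : ℕ∞) f (closedBall 0 R)) :
    ContDiffOn ℝ (⊤ : ℕ∞) (lapWithin (closedBall 0 R) f) (closedBall 0 R) := by
  unfold lapWithin
  exact ContDiffOn.sum fun i _ => nb_D_smooth hR (nb_D_smooth hR hf _) _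

lemma nb_trans_deriv_zero {t : ℝ} (ht : t ≤ 0 ∨ 1 < t) : deriv Real.smoothTransition t = 0 := by
  rcases ht with ht | ht
  · have hmin : IsLocalMin Real.smoothTransition t := by
      refine Filter.Eventually.of_forall fun y => ?_
      rw [Real.smoothTransition.zero_of_nonpos ht]
      exact Real.smoothTransition.nonneg y
    exact hmin.deriv_eq_zero
  · have hmax : IsLocalMax Real.smoothTransition t := by
      refine Filter.Eventually.of_forall fun y => ?_
      rw [Real.smoothTransition.one_of_one_le ht.le]
      exact Real.smoothTransition.le_one y
    exact hmax.deriv_eq_zero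

lemma nb_trans_deriv_cont : Continuous (deriv Real.smoothTransition) :=
  (Real.smoothTransition.contDiff (n := 1)).continuous_deriv (by simp)

lemma nb_trans_bound : ∃ M : ℝ, 0 ≤ M ∧ ∀ t : ℝ, |deriv Real.smoothTransition t| * |t + 1| ≤ M := by
  have hc : Continuous fun t : ℝ => |deriv Real.smoothTransition t| * |t + 1| :=
    nb_trans_deriv_cont.abs.mul (by fun_prop)
  obtain ⟨M, hM⟩ := (isCompact_Icc (a := (0:ℝ)) (b := 1)).exists_bound_of_continuousOn hc.continuousOn
  refine ⟨max M 0, le_max_right _ _, fun t => ?_⟩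
  by_cases ht : t ∈ Icc (0:ℝ) 1
  · exact (le_abs_self _).trans ((hM t ht).trans (le_max_left _ _))
  · rw [nb_trans_deriv_zero]
    · simp
    · by_contra! h
      exact ht ⟨h.1.le, h.2⟩

/-- cutoff -/
def nbCut (n : ℕ) (R k : ℝ) (x : 𝔼 n) : ℝ := Real.smoothTransition (k * (R ^ 2 - ‖x‖ ^ 2) - 1)

lemma nbCut_hasFDerivAt {n : ℕ} (R k : ℝ) (x : 𝔼 n) :
    HasFDerivAt (nbCut n R k)
      ((deriv Real.smoothTransition (k * (R ^ 2 - ‖x‖ ^ 2) - 1) * (-2 * k)) • innerSL ℝ x) x := by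
  have h1 : HasFDerivAt (fun x : 𝔼 n => k * (R ^ 2 - ‖x‖ ^ 2) - 1) ((-2 * k) • innerSL ℝ x) x := by
    have h := ((((hasStrictFDerivAt_norm_sq x).hasFDerivAt).const_sub (R ^ 2)).const_mul k).sub_const 1
    refine h.congr_fderiv ?_
    ext y
    simp
    ring
  have h2 : HasDerivAt Real.smoothTransition
      (deriv Real.smoothTransition (k * (R ^ 2 - ‖x‖ ^ 2) - 1)) (k * (R ^ 2 - ‖x‖ ^ 2) - 1) :=
    (((Real.smoothTransition.contDiff (n := 1)).differentiable (by simp)) _).hasDerivAt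
  have h3 := h2.comp_hasFDerivAt x h1
  rw [smul_smul] at h3
  exact h3

lemma nb_div {n : ℕ} {R : ℝ} (hR : 0 < R) (F : Fin n → (𝔼 n) → ℝ)
    (hF : ∀ i, ContDiffOn ℝ (⊤ : ℕ∞) (F i) (closedBall 0 R))
    (hb : ∀ x : 𝔼 n, ‖x‖ = R → ∑ i, x i * F i x = 0) :
    ∫ x in ball (0 : 𝔼 n) R,
      ∑ i, fderivWithin ℝ (F i) (closedBall 0 R) x (EuclideanSpace.single i 1) = 0 := by
  have hsub : ball (0 : 𝔼 n) R ⊆ closedBall 0 R := ball_subset_closedBall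
  have hK : IsCompact (closedBall (0 : 𝔼 n) R) := isCompact_closedBall _ _
  have hder : ∀ i, ∀ x ∈ ball (0 : 𝔼 n) R,
      fderivWithin ℝ (F i) (closedBall 0 R) x = fderiv ℝ (F i) x := fun i x hx =>
    fderivWithin_of_mem_nhds (Filter.mem_of_superset (isOpen_ball.mem_nhds hx) hsub)
  have hdiff : ∀ i, ∀ x ∈ ball (0 : 𝔼 n) R, DifferentiableAt ℝ (F i) x := fun i x hx =>
    ((hF i).differentiableOn (by simp)).differentiableAt
      (Filter.mem_of_superset (isOpen_ball.mem_nhds hx) hsub)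
  -- the radial bound
  set H : (𝔼 n) → ℝ := fun x => ∑ i, x i * F i x with hH
  have hHs : ContDiffOn ℝ (⊤ : ℕ∞) H (closedBall 0 R) := by
    refine ContDiffOn.sum fun i _ => ContDiffOn.mul ?_ (hF i)
    exact (EuclideanSpace.proj (𝕜 := ℝ) i : (𝔼 n) →L[ℝ] ℝ).contDiff.contDiffOn
  obtain ⟨C, hC0, hC⟩ : ∃ C : ℝ, 0 ≤ C ∧ ∀ x ∈ ball (0 : 𝔼 n) R, |H x| ≤ C * (R ^ 2 - ‖x‖ ^ 2) := by
    have hcont := (hHs.fderivWithin (nb_uniq hR) (m := (⊤ : ℕ∞)) (by simp)).continuousOn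
    obtain ⟨L, hL⟩ := hK.exists_bound_of_continuousOn hcont
    have hL0 : 0 ≤ L := (norm_nonneg _).trans (hL 0 (by simpa using hR.le))
    have hz : H 0 = 0 := by simp [hH]
    refine ⟨L / R, by positivity, fun x hx => ?_⟩
    have hxR : ‖x‖ < R := by simpa using hx
    rcases eq_or_ne x 0 with rfl | hx0
    · rw [hz]; simp; positivity
    have hxp : 0 < ‖x‖ := norm_pos_iff.2 hx0
    set y : 𝔼 n := (R / ‖x‖) • x with hy
    have hyn : ‖y‖ = R := by
      rw [hy, norm_smul, Real.norm_eq_abs, abs_of_pos (by positivity)]; field_simp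
    have hHy : H y = 0 := hb y hyn
    have := (convex_closedBall (0 : 𝔼 n) R).norm_image_sub_le_of_norm_fderivWithin_le
      (hHs.differentiableOn (by simp)) hL (x := y) (y := x) (by simp [hyn]) (hsub hx)
    rw [hHy, sub_zero, Real.norm_eq_abs] at this
    have hxy : ‖x - y‖ = R - ‖x‖ := by
      have : x - y = (1 - R / ‖x‖) • x := by rw [hy, sub_smul, one_smul]
      rw [this, norm_smul, Real.norm_eq_abs, abs_of_nonpos]
      · field_simp; ring
      · rw [sub_nonpos, le_div_iff₀ hxp]; linarith
    rw [hxy] at this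
    refine this.trans ?_
    rw [div_mul_eq_mul_div, le_div_iff₀ hR]
    have : 0 ≤ L * ((R - ‖x‖) * ‖x‖) := by
      have : 0 ≤ R - ‖x‖ := by linarith
      positivity
    nlinarith
  have hdivc : ContinuousOn (fun x => ∑ i, fderivWithin ℝ (F i) (closedBall 0 R) x
      (EuclideanSpace.single i 1)) (closedBall 0 R) :=
    continuousOn_finsetSum _ fun i _ => (nb_D_smooth hR (hF i) _).continuousOn
  obtain ⟨A, hA⟩ := hK.exists_bound_of_continuousOn hdivc
  obtain ⟨M, hM0, hM⟩ := nb_trans_bound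
  have hcutc : ∀ k : ℝ, Continuous (nbCut n R k) := fun k => by
    unfold nbCut; exact Real.smoothTransition.continuous.comp (by fun_prop)
  have hdcutc : ∀ (k : ℝ), Continuous (fun x : 𝔼 n =>
      deriv Real.smoothTransition (k * (R ^ 2 - ‖x‖ ^ 2) - 1)) := fun k =>
    nb_trans_deriv_cont.comp (by fun_prop)
  -- the approximations
  let G : ℕ → (𝔼 n) → ℝ := fun k x =>
    nbCut n R (k + 1) x * (∑ i, fderivWithin ℝ (F i) (closedBall 0 R) x
      (EuclideanSpace.single i 1)) +
    deriv Real.smoothTransition (((k:ℝ) + 1) * (R ^ 2 - ‖x‖ ^ 2) - 1) * (-2 * ((k:ℝ) + 1)) * H x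
  have hGint : ∀ k, ∫ x in ball (0 : 𝔼 n) R, G k x = 0 := by
    intro k
    have hk : (0:ℝ) < (k:ℝ) + 1 := by positivity
    have hneg : ∀ x : 𝔼 n, x ∉ ball (0 : 𝔼 n) R → ((k:ℝ) + 1) * (R ^ 2 - ‖x‖ ^ 2) - 1 ≤ 0 := by
      intro x hx
      have hx' : R ≤ ‖x‖ := by simpa using hx
      have : R ^ 2 ≤ ‖x‖ ^ 2 := by gcongr
      nlinarith
    have hcut0 : ∀ x : 𝔼 n, x ∉ ball (0 : 𝔼 n) R → nbCut n R (k+1) x = 0 := fun x hx =>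
      Real.smoothTransition.zero_of_nonpos (hneg x hx)
    have hdcut0 : ∀ x : 𝔼 n, x ∉ ball (0 : 𝔼 n) R → fderiv ℝ (nbCut n R (k+1)) x = 0 := by
      intro x hx
      rw [(nbCut_hasFDerivAt R (k+1) x).fderiv, nb_trans_deriv_zero (Or.inl (hneg x hx))]
      simp
    have hts : tsupport (nbCut n R (k+1)) ⊆ ball (0 : 𝔼 n) R := by
      have h1 : tsupport (nbCut n R (k+1)) ⊆ {x : 𝔼 n | 0 ≤ ((k:ℝ) + 1) * (R ^ 2 - ‖x‖ ^ 2) - 1} := by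
        refine closure_minimal ?_ (isClosed_le (by fun_prop) (by fun_prop))
        intro x hx
        by_contra h
        exact hx (Real.smoothTransition.zero_of_nonpos (not_le.1 h).le)
      intro x hx
      have h2 := h1 hx
      by_contra hx'
      have hx'' : R ≤ ‖x‖ := by simpa using hx'
      have : R ^ 2 ≤ ‖x‖ ^ 2 := by gcongr
      simp only [mem_ofPred_eq] at h2
      nlinarith
    have hI : ∀ f g : (𝔼 n) → ℝ, ContinuousOn g (closedBall 0 R) → EqOn f g (ball 0 R) →
        (∀ x, x ∉ ball (0 : 𝔼 n) R → f x = 0) → Integrable f := by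
      intro f g hg hfg hf
      have h1 : IntegrableOn g (ball 0 R) := (hg.integrableOn_compact hK).mono_set hsub
      have h2 : IntegrableOn f (ball 0 R) := h1.congr_fun hfg.symm measurableSet_ball
      refine (integrableOn_iff_integrable_of_support_subset ?_).1 h2
      intro x hx
      by_contra h
      exact hx (hf x h)
    have hi1 : ∀ i, Integrable (fun x => fderiv ℝ (nbCut n R (k+1)) x (EuclideanSpace.single i 1) * F i x) := by
      intro i
      refine hI _ (fun x => (deriv Real.smoothTransition (((k:ℝ)+1) * (R ^ 2 - ‖x‖ ^ 2) - 1)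
        * (-2 * ((k:ℝ)+1)) * x i) * F i x) ?_ ?_ ?_
      · refine ContinuousOn.mul (Continuous.continuousOn ?_) (hF i).continuousOn
        exact ((hdcutc _).mul continuous_const).mul (EuclideanSpace.proj (𝕜 := ℝ) i : (𝔼 n) →L[ℝ] ℝ).continuous
      · intro x hx
        simp only [(nbCut_hasFDerivAt R (k+1) x).fderiv]
        simp [EuclideanSpace.inner_single_right]
      · intro x hx
        simp [hdcut0 x hx]
    have hi2 : ∀ i, Integrable (fun x => nbCut n R (k+1) x * fderiv ℝ (F i) x (EuclideanSpace.single i 1)) := by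
      intro i
      refine hI _ (fun x => nbCut n R (k+1) x * fderivWithin ℝ (F i) (closedBall 0 R) x (EuclideanSpace.single i 1)) ?_ ?_ ?_
      · exact (hcutc _).continuousOn.mul (nb_D_smooth hR (hF i) _).continuousOn
      · intro x hx
        simp only [hder i x hx]
      · intro x hx
        simp [hcut0 x hx]
    have hi3 : ∀ i, Integrable (fun x => nbCut n R (k+1) x * F i x) := by
      intro i
      refine hI _ (fun x => nbCut n R (k+1) x * F i x) ?_ (fun x hx => rfl) ?_
      · exact (hcutc _).continuousOn.mul (hF i).continuousOn
      · intro x hx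
        simp [hcut0 x hx]
    have hibp : ∀ i, ∫ x, (nbCut n R (k+1) x * fderiv ℝ (F i) x (EuclideanSpace.single i 1)
        + fderiv ℝ (nbCut n R (k+1)) x (EuclideanSpace.single i 1) * F i x) = 0 := by
      intro i
      rw [integral_add (hi2 i) (hi1 i), integral_mul_fderiv_eq_neg_fderiv_mul_of_integrable
        (hi1 i) (hi2 i) (hi3 i) (fun x _ => (nbCut_hasFDerivAt R (k+1) x).differentiableAt)
        (fun x hx => hdiff i x (hts hx))]
      simp
    have hsum : ∫ x, ∑ i, (nbCut n R (k+1) x * fderiv ℝ (F i) x (EuclideanSpace.single i 1)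
        + fderiv ℝ (nbCut n R (k+1)) x (EuclideanSpace.single i 1) * F i x) = 0 := by
      refine (integral_finsetSum _ (fun i _ => (hi2 i).add (hi1 i))).trans ?_
      exact Finset.sum_eq_zero fun i _ => hibp i
    refine Eq.trans ?_ ((setIntegral_eq_integral_of_forall_compl_eq_zero
      (s := ball (0 : 𝔼 n) R) ?_).trans hsum)
    · refine setIntegral_congr_fun measurableSet_ball ?_
      intro x hx
      simp only [G, hH, (nbCut_hasFDerivAt R (k+1) x).fderiv, Finset.mul_sum]
      rw [← Finset.sum_add_distrib]
      refine Finset.sum_congr rfl fun i _ => ?_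
      rw [hder i x hx]
      simp [EuclideanSpace.inner_single_right]
      ring
    · intro x hx
      simp [hcut0 x hx, hdcut0 x hx]
  have hlim := tendsto_integral_of_dominated_convergence
    (μ := volume.restrict (ball (0 : 𝔼 n) R)) (F := G)
    (f := fun x => ∑ i, fderivWithin ℝ (F i) (closedBall 0 R) x (EuclideanSpace.single i 1))
    (fun _ => A + 2 * M * C) ?_ ?_ ?_ ?_
  · simp only [hGint] at hlim
    exact tendsto_nhds_unique hlim tendsto_const_nhds
  · intro k
    refine ContinuousOn.aestronglyMeasurable ?_ measurableSet_ball
    refine ContinuousOn.mono ?_ hsub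
    exact ((hcutc _).continuousOn.mul hdivc).add
      (((hdcutc _).mul continuous_const).continuousOn.mul hHs.continuousOn)
  · exact integrable_const_iff.2 (Or.inr ⟨by simpa using measure_ball_lt_top⟩)
  · intro k
    refine (ae_restrict_iff' measurableSet_ball).2 (Filter.Eventually.of_forall fun x hx => ?_)
    refine (norm_add_le _ _).trans (add_le_add ?_ ?_)
    · rw [nbCut, norm_mul, Real.norm_eq_abs, abs_of_nonneg (Real.smoothTransition.nonneg _)]
      exact (mul_le_of_le_one_left (norm_nonneg _) (Real.smoothTransition.le_one _)).trans (hA x (hsub hx))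
    · have h1 := hC x hx
      have hk : (0:ℝ) < (k:ℝ) + 1 := by positivity
      have h2 := hM (((k:ℝ) + 1) * (R ^ 2 - ‖x‖ ^ 2) - 1)
      have hpos : 0 ≤ R ^ 2 - ‖x‖ ^ 2 := by
        have hxR : ‖x‖ < R := by simpa using hx
        have : ‖x‖ ^ 2 ≤ R ^ 2 := by gcongr
        linarith
      rw [sub_add_cancel, abs_of_nonneg (by positivity : 0 ≤ ((k:ℝ) + 1) * (R ^ 2 - ‖x‖ ^ 2))] at h2
      rw [norm_mul, norm_mul, Real.norm_eq_abs, Real.norm_eq_abs, Real.norm_eq_abs]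
      have h3 : |(-2 * ((k:ℝ) + 1))| = 2 * ((k:ℝ) + 1) := by
        rw [abs_mul, abs_of_pos hk]; norm_num
      rw [h3]
      set d := |deriv Real.smoothTransition (((k:ℝ) + 1) * (R ^ 2 - ‖x‖ ^ 2) - 1)|
      have hd : 0 ≤ d := abs_nonneg _
      calc d * (2 * ((k:ℝ) + 1)) * |H x| ≤ d * (2 * ((k:ℝ) + 1)) * (C * (R ^ 2 - ‖x‖ ^ 2)) := by gcongr
        _ = 2 * (d * (((k:ℝ) + 1) * (R ^ 2 - ‖x‖ ^ 2))) * C := by ring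
        _ ≤ 2 * M * C := by gcongr
  · refine (ae_restrict_iff' measurableSet_ball).2 (Filter.Eventually.of_forall fun x hx => ?_)
    have hxR : ‖x‖ < R := by simpa using hx
    have hpos : 0 < R ^ 2 - ‖x‖ ^ 2 := by
      have : ‖x‖ ^ 2 < R ^ 2 := by gcongr
      linarith
    obtain ⟨N, hN⟩ := exists_nat_gt (2 / (R ^ 2 - ‖x‖ ^ 2))
    refine tendsto_const_nhds.congr' ?_
    filter_upwards [Filter.eventually_ge_atTop N] with k hk
    have hk' : (N:ℝ) ≤ k := by exact_mod_cast hk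
    have h1 : 1 < ((k:ℝ) + 1) * (R ^ 2 - ‖x‖ ^ 2) - 1 := by
      rw [div_lt_iff₀ hpos] at hN
      nlinarith
    simp only [G]
    rw [nb_trans_deriv_zero (Or.inr h1), nbCut, Real.smoothTransition.one_of_one_le h1.le]
    ring

lemma nb_sum_coord {n : ℕ} (T : (𝔼 n) →L[ℝ] ℝ) (x : 𝔼 n) :
    ∑ i, x i * T (EuclideanSpace.single i 1) = T x := by
  have h := (EuclideanSpace.basisFun (Fin n) ℝ).sum_repr x
  conv_rhs => rw [← h]
  simp

lemma nb_integrable {n : ℕ} {R : ℝ} {f : (𝔼 n) → ℝ}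
    (hf : ContinuousOn f (closedBall 0 R)) : IntegrableOn f (ball 0 R) :=
  (hf.integrableOn_compact (isCompact_closedBall _ _)).mono_set ball_subset_closedBall

/-- Neumann condition -/
def NbN {n : ℕ} (R : ℝ) (f : (𝔼 n) → ℝ) : Prop :=
  ∀ x : 𝔼 n, ‖x‖ = R → fderivWithin ℝ f (closedBall 0 R) x (‖x‖⁻¹ • x) = 0

lemma nb_green {n : ℕ} {R : ℝ} (hR : 0 < R) {f g : (𝔼 n) → ℝ}
    (hf : ContDiffOn ℝ (⊤ : ℕ∞) f (closedBall 0 R))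
    (hg : ContDiffOn ℝ (⊤ : ℕ∞) g (closedBall 0 R)) (hN : NbN R g) :
    ∫ x in ball (0 : 𝔼 n) R, f x * lapWithin (closedBall 0 R) g x =
    - ∫ x in ball (0 : 𝔼 n) R, ∑ i, fderivWithin ℝ f (closedBall 0 R) x (EuclideanSpace.single i 1) *
      fderivWithin ℝ g (closedBall 0 R) x (EuclideanSpace.single i 1) := by
  have h := nb_div hR (fun i x => f x * fderivWithin ℝ g (closedBall 0 R) x (EuclideanSpace.single i 1))
    (fun i => hf.mul (nb_D_smooth hR hg _)) (by
      intro x hx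
      have h1 := hN x hx
      rw [map_smul, smul_eq_mul, hx] at h1
      have h2 : fderivWithin ℝ g (closedBall 0 R) x x = 0 := by
        rcases mul_eq_zero.1 h1 with h | h
        · exact absurd h (inv_ne_zero hR.ne')
        · exact h
      rw [← nb_sum_coord] at h2
      calc _ = f x * ∑ i, x i * fderivWithin ℝ g (closedBall 0 R) x (EuclideanSpace.single i 1) := by
            rw [Finset.mul_sum]; exact Finset.sum_congr rfl fun i _ => by ring
        _ = 0 := by rw [h2, mul_zero])
  rw [eq_neg_iff_add_eq_zero, ← integral_add, ← h]
  · refine setIntegral_congr_fun measurableSet_ball ?_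
    intro x hx
    have hxK := ball_subset_closedBall hx
    have hu := nb_uniq (n := n) hR x hxK
    simp only [lapWithin, Finset.mul_sum]
    rw [← Finset.sum_add_distrib]
    refine Finset.sum_congr rfl fun i _ => ?_
    rw [fderivWithin_fun_mul hu ((hf.differentiableOn (by simp)) x hxK)
      (((nb_D_smooth hR hg _).differentiableOn (by simp)) x hxK)]
    simp
    ring
  · exact nb_integrable (hf.continuousOn.mul (nb_lap_smooth hR hg).continuousOn)
  · exact nb_integrable (continuousOn_finsetSum _ fun i _ =>
      (nb_D_smooth hR hf _).continuousOn.mul (nb_D_smooth hR hg _).continuousOn)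

lemma nb_symm {n : ℕ} {R : ℝ} (hR : 0 < R) {f g : (𝔼 n) → ℝ}
    (hf : ContDiffOn ℝ (⊤ : ℕ∞) f (closedBall 0 R))
    (hg : ContDiffOn ℝ (⊤ : ℕ∞) g (closedBall 0 R)) (hNf : NbN R f) (hN : NbN R g) :
    ∫ x in ball (0 : 𝔼 n) R, f x * lapWithin (closedBall 0 R) g x =
    ∫ x in ball (0 : 𝔼 n) R, lapWithin (closedBall 0 R) f x * g x := by
  rw [nb_green hR hf hg hN]
  simp only [mul_comm _ (g _)]
  rw [nb_green hR hg hf hNf]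
  simp only [mul_comm]

lemma nb_nonpos {n : ℕ} {R : ℝ} (hR : 0 < R) {f : (𝔼 n) → ℝ}
    (hf : ContDiffOn ℝ (⊤ : ℕ∞) f (closedBall 0 R)) (hNf : NbN R f) :
    ∫ x in ball (0 : 𝔼 n) R, f x * lapWithin (closedBall 0 R) f x ≤ 0 := by
  rw [nb_green hR hf hf hNf, neg_nonpos]
  exact integral_nonneg fun x => Finset.sum_nonneg fun i _ => mul_self_nonneg _

lemma nb_extend {n : ℕ} {R : ℝ} (hR : 0 < R) {f g : (𝔼 n) → ℝ}
    (hf : ContinuousOn f (closedBall 0 R)) (hg : ContinuousOn g (closedBall 0 R))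
    (h : EqOn f g (ball 0 R)) : EqOn f g (closedBall 0 R) :=
  h.of_subset_closure hf hg ball_subset_closedBall (by rw [closure_ball _ hR.ne'])

lemma nb_zero {n : ℕ} {R : ℝ} (hR : 0 < R) {f : (𝔼 n) → ℝ}
    (hf : ContinuousOn f (closedBall 0 R))
    (h : ∫ x in ball (0 : 𝔼 n) R, f x * f x ≤ 0) : EqOn f 0 (closedBall 0 R) := by
  refine nb_extend hR hf continuousOn_const ?_
  have h0 : ∫ x in ball (0 : 𝔼 n) R, f x * f x = 0 :=
    le_antisymm h (integral_nonneg fun x => mul_self_nonneg _)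
  rw [setIntegral_eq_zero_iff_of_nonneg_ae (Filter.Eventually.of_forall fun x => mul_self_nonneg _)
    (nb_integrable (hf.mul hf))] at h0
  have h1 := Measure.eqOn_open_of_ae_eq (μ := volume) h0 isOpen_ball
    ((hf.mul hf).mono ball_subset_closedBall) continuousOn_const
  intro x hx
  exact mul_self_eq_zero.1 (h1 hx)

lemma nb_congr {n : ℕ} {R : ℝ} {f g : (𝔼 n) → ℝ} (h : EqOn f g (closedBall 0 R)) :
    EqOn (lapWithin (closedBall 0 R) f) (lapWithin (closedBall 0 R) g) (closedBall 0 R) := by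
  intro x hx
  unfold lapWithin
  refine Finset.sum_congr rfl fun i _ => ?_
  rw [fderivWithin_congr' (fun y hy => by rw [fderivWithin_congr' h hy]) hx]

lemma nb_congrN {n : ℕ} {R : ℝ} {f g : (𝔼 n) → ℝ} (h : EqOn f g (closedBall 0 R))
    (hg : NbN R g) : NbN R f := by
  intro x hx
  rw [fderivWithin_congr' h (by simp [hx])]
  exact hg x hx

lemma nb_lin {n : ℕ} {R : ℝ} (hR : 0 < R) {f g : (𝔼 n) → ℝ} (c : ℝ)
    (hf : ContDiffOn ℝ (⊤ : ℕ∞) f (closedBall 0 R))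
    (hg : ContDiffOn ℝ (⊤ : ℕ∞) g (closedBall 0 R)) :
    EqOn (lapWithin (closedBall 0 R) (fun x => f x + c * g x))
      (fun x => lapWithin (closedBall 0 R) f x + c * lapWithin (closedBall 0 R) g x)
      (closedBall 0 R) := by
  have key : ∀ {f g : (𝔼 n) → ℝ}, ContDiffOn ℝ (⊤ : ℕ∞) f (closedBall 0 R) →
      ContDiffOn ℝ (⊤ : ℕ∞) g (closedBall 0 R) → ∀ x ∈ closedBall (0 : 𝔼 n) R, ∀ v : 𝔼 n,
      fderivWithin ℝ (fun x => f x + c * g x) (closedBall 0 R) x v =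
        fderivWithin ℝ f (closedBall 0 R) x v + c * fderivWithin ℝ g (closedBall 0 R) x v := by
    intro f g hf hg x hx v
    have hu := nb_uniq (n := n) hR x hx
    have hgx := (hg.differentiableOn (by simp)) x hx
    rw [fderivWithin_fun_add hu ((hf.differentiableOn (by simp)) x hx) (hgx.const_mul c),
      fderivWithin_const_mul hu hgx]
    simp
  intro x hx
  simp only [lapWithin, Finset.mul_sum]
  rw [← Finset.sum_add_distrib]
  refine Finset.sum_congr rfl fun i _ => ?_
  rw [fderivWithin_congr' (fun y hy => key hf hg y hy _) hx]
  exact key (nb_D_smooth hR hf _) (nb_D_smooth hR hg _) x hx _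

lemma nb_linN {n : ℕ} {R : ℝ} (hR : 0 < R) {f g : (𝔼 n) → ℝ} (c : ℝ)
    (hf : ContDiffOn ℝ (⊤ : ℕ∞) f (closedBall 0 R))
    (hg : ContDiffOn ℝ (⊤ : ℕ∞) g (closedBall 0 R)) (hNf : NbN R f) (hNg : NbN R g) :
    NbN R (fun x => f x + c * g x) := by
  intro x hx
  have hxK : x ∈ closedBall (0 : 𝔼 n) R := by simp [hx]
  have hu := nb_uniq (n := n) hR x hxK
  have hgx := (hg.differentiableOn (by simp)) x hxK
  rw [fderivWithin_fun_add hu ((hf.differentiableOn (by simp)) x hxK) (hgx.const_mul c),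
      fderivWithin_const_mul hu hgx]
  have h1 := hNf x hx
  have h2 := hNg x hx
  simp only [ContinuousLinearMap.add_apply, ContinuousLinearMap.smul_apply, h1, h2]
  simp

lemma nb_zeroN {n : ℕ} {R : ℝ} : NbN R (fun _ : 𝔼 n => (0:ℝ)) := by
  intro x hx
  simp

lemma nb_zeroL {n : ℕ} {R : ℝ} : lapWithin (closedBall (0 : 𝔼 n) R) (fun _ => (0:ℝ)) = fun _ => 0 := by
  funext x
  simp [lapWithin]

lemma nb_iter_smooth {n : ℕ} {R : ℝ} (hR : 0 < R) {f : (𝔼 n) → ℝ}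
    (hf : ContDiffOn ℝ (⊤ : ℕ∞) f (closedBall 0 R)) (j : ℕ) :
    ContDiffOn ℝ (⊤ : ℕ∞) ((lapWithin (closedBall 0 R))^[j] f) (closedBall 0 R) := by
  induction j with
  | zero => exact hf
  | succ j ih => rw [Function.iterate_succ_apply']; exact nb_lap_smooth hR ih

/-- finite combinations -/
lemma nb_sum {n : ℕ} {R : ℝ} (hR : 0 < R) (c : ℕ → ℝ) (f : ℕ → (𝔼 n) → ℝ)
    (hf : ∀ j, ContDiffOn ℝ (⊤ : ℕ∞) (f j) (closedBall 0 R)) (m : ℕ)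
    (hN : ∀ j < m, NbN R (f j)) :
    ContDiffOn ℝ (⊤ : ℕ∞) (fun x => ∑ j ∈ Finset.range m, c j * f j x) (closedBall 0 R) ∧
    NbN R (fun x => ∑ j ∈ Finset.range m, c j * f j x) ∧
    EqOn (lapWithin (closedBall 0 R) (fun x => ∑ j ∈ Finset.range m, c j * f j x))
      (fun x => ∑ j ∈ Finset.range m, c j * lapWithin (closedBall 0 R) (f j) x)
      (closedBall 0 R) := by
  induction m with
  | zero =>
    simp only [Finset.range_zero, Finset.sum_empty]
    exact ⟨contDiffOn_const, nb_zeroN, by rw [nb_zeroL]; exact fun _ _ => rfl⟩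
  | succ m ih =>
    obtain ⟨h1, h2, h3⟩ := ih fun j hj => hN j (by omega)
    simp only [Finset.sum_range_succ]
    refine ⟨h1.add (contDiffOn_const.mul (hf m)), nb_linN hR _ h1 (hf m) h2 (hN m (by omega)), ?_⟩
    intro x hx
    rw [nb_lin hR _ h1 (hf m) hx]
    simp only [h3 hx]

/-- `∫ b_{i+j} b_0 = ∫ b_i b_j`. -/
lemma nb_shift {n : ℕ} {R : ℝ} (hR : 0 < R) (b : ℕ → (𝔼 n) → ℝ)
    (hb : ∀ j, ContDiffOn ℝ (⊤ : ℕ∞) (b j) (closedBall 0 R)) (N : ℕ)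
    (hN : ∀ j < N, NbN R (b j))
    (hL : ∀ j, EqOn (lapWithin (closedBall 0 R) (b j)) (b (j + 1)) (closedBall 0 R))
    (i j : ℕ) (hij : i + j ≤ N) :
    ∫ x in ball (0 : 𝔼 n) R, b (i + j) x * b 0 x = ∫ x in ball (0 : 𝔼 n) R, b j x * b i x := by
  induction i generalizing j with
  | zero => simp
  | succ i ih =>
    have h1 := ih (j + 1) (by omega)
    rw [show i + 1 + j = i + (j + 1) by ring, h1]
    have h2 := nb_symm hR (hb j) (hb i) (hN j (by omega)) (hN i (by omega))
    have e1 : ∫ x in ball (0 : 𝔼 n) R, b j x * lapWithin (closedBall 0 R) (b i) x =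
        ∫ x in ball (0 : 𝔼 n) R, b j x * b (i+1) x :=
      setIntegral_congr_fun measurableSet_ball fun x hx => by
        simp only [hL i (ball_subset_closedBall hx)]
    have e2 : ∫ x in ball (0 : 𝔼 n) R, lapWithin (closedBall 0 R) (b j) x * b i x =
        ∫ x in ball (0 : 𝔼 n) R, b (j+1) x * b i x :=
      setIntegral_congr_fun measurableSet_ball fun x hx => by
        simp only [hL j (ball_subset_closedBall hx)]
    rw [← e1, ← e2, h2]

lemma nb_poly_to_lap {n m : ℕ} (hm : 1 ≤ m) {R : ℝ} (hR : 0 < R) {τ : ℝ} (hτ : 0 < τ)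
    (h : IsPolyLapNeumannEigenvalueBall n m R (τ ^ (2 * m))) :
    IsLapNeumannEigenvalueBall n R τ := by
  obtain ⟨v, hv, hne, heq, hbd⟩ := h
  set L := lapWithin (closedBall (0 : 𝔼 n) R) with hLdef
  have ha : ∀ j, ContDiffOn ℝ (⊤ : ℕ∞) (L^[j] v) (closedBall 0 R) := nb_iter_smooth hR hv
  have haN : ∀ j < 2 * m, NbN R (L^[j] v) := fun j hj x hx => hbd j hj x hx
  have heqK : EqOn (L^[2 * m] v) (fun x => τ ^ (2 * m) * v x) (closedBall 0 R) :=
    nb_extend hR (ha _).continuousOn (continuousOn_const.mul hv.continuousOn) heq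
  let b : ℕ → (𝔼 n) → ℝ := fun j x => L^[j + 1] v x + (-τ) * L^[j] v x
  have hb : ∀ j, ContDiffOn ℝ (⊤ : ℕ∞) (b j) (closedBall 0 R) := fun j =>
    (ha (j+1)).add (contDiffOn_const.mul (ha j))
  have hbN : ∀ j < 2 * m - 1, NbN R (b j) := fun j hj =>
    nb_linN hR _ (ha _) (ha _) (haN _ (by omega)) (haN _ (by omega))
  have hbL : ∀ j, EqOn (L (b j)) (b (j+1)) (closedBall 0 R) := by
    intro j x hx
    rw [hLdef, nb_lin hR _ (ha _) (ha _) hx]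
    simp only [b, ← hLdef, Function.iterate_succ_apply']
  let w : (𝔼 n) → ℝ := fun x => ∑ j ∈ Finset.range m, τ ^ (2 * (m - 1 - j)) * b (2 * j) x
  obtain ⟨hw, hwN, hwL⟩ := nb_sum hR (fun j => τ ^ (2 * (m - 1 - j))) (fun j => b (2 * j))
    (fun j => hb _) m (fun j hj => hbN _ (by omega))
  by_cases hw0 : ∃ x ∈ closedBall (0 : 𝔼 n) R, w x ≠ 0
  · refine ⟨w, hw, hw0, ?_, hwN⟩
    intro x hx
    have hxK := ball_subset_closedBall hx
    have h1 := hwL hxK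
    change L w x = _ at h1
    change L w x = _
    rw [h1]
    simp only [w]
    rw [← sub_eq_zero]
    have h2 : ∀ j ∈ Finset.range m, τ ^ (2 * (m - 1 - j)) * lapWithin (closedBall 0 R) (b (2 * j)) x
        + τ * (τ ^ (2 * (m - 1 - j)) * b (2 * j) x)
        = τ ^ (2 * (m - (j + 1))) * L^[2 * (j + 1)] v x - τ ^ (2 * (m - j)) * L^[2 * j] v x := by
      intro j hj
      have hj' : j < m := Finset.mem_range.1 hj
      have h3 := hbL (2 * j) hxK
      rw [← hLdef, h3]
      obtain ⟨r, rfl⟩ : ∃ r, m = j + 1 + r := ⟨m - (j+1), by omega⟩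
      rw [show j + 1 + r - 1 - j = r by omega, show j + 1 + r - (j+1) = r by omega,
        show j + 1 + r - j = r + 1 by omega]
      simp only [b]
      rw [show 2 * (j+1) = 2 * j + 1 + 1 by ring]
      ring
    have h4 := Finset.sum_congr rfl h2
    rw [Finset.sum_add_distrib, ← Finset.mul_sum, Finset.sum_range_sub
      (fun j => τ ^ (2 * (m - j)) * L^[2 * j] v x)] at h4
    have h5 := heqK hxK
    simp only at h5
    rw [h5] at h4
    simp at h4
    linarith
  · exfalso
    push Not at hw0
    have hnn : ∀ j, 0 ≤ ∫ x in ball (0 : 𝔼 n) R, b j x * b j x := fun j =>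
      integral_nonneg fun x => mul_self_nonneg _
    have hI : ∀ i j, IntegrableOn (fun x => b i x * b j x) (ball 0 R) := fun i j =>
      nb_integrable ((hb i).continuousOn.mul (hb j).continuousOn)
    have h1 : ∑ j ∈ Finset.range m, τ ^ (2 * (m - 1 - j)) * ∫ x in ball (0 : 𝔼 n) R, b j x * b j x = 0 := by
      have h2 : ∫ x in ball (0 : 𝔼 n) R, w x * b 0 x = 0 := by
        rw [setIntegral_congr_fun measurableSet_ball (g := fun _ => (0:ℝ))]
        · simp
        · intro x hx
          simp [hw0 x (ball_subset_closedBall hx)]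
      rw [← h2]
      simp only [w, Finset.sum_mul]
      rw [integral_finsetSum]
      · refine Finset.sum_congr rfl fun j hj => ?_
        have hj' : j < m := Finset.mem_range.1 hj
        simp only [mul_assoc]
        rw [integral_const_mul, two_mul j, nb_shift hR b hb (2 * m - 1) hbN hbL j j (by omega)]
      · intro j _
        simp only [mul_assoc]
        exact (hI _ _).const_mul _
    have h0 : ∫ x in ball (0 : 𝔼 n) R, b 0 x * b 0 x ≤ 0 := by
      have h3 := (Finset.sum_eq_zero_iff_of_nonneg (fun j _ => by
        have := hnn j
        positivity)).1 h1 0 (Finset.mem_range.2 (by omega))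
      rcases mul_eq_zero.1 h3 with h | h
      · exact absurd h (by positivity)
      · exact h.le
    have hb0 := nb_zero hR (hb 0).continuousOn h0
    have hLv : EqOn (L v) (fun x => τ * v x) (closedBall 0 R) := by
      intro x hx
      have := hb0 hx
      simp [b] at this
      simp only
      linarith
    have h6 := nb_nonpos hR hv (haN 0 (by omega))
    have h7 : ∫ x in ball (0 : 𝔼 n) R, v x * lapWithin (closedBall 0 R) v x =
        τ * ∫ x in ball (0 : 𝔼 n) R, v x * v x := by
      rw [← integral_const_mul]
      refine setIntegral_congr_fun measurableSet_ball fun x hx => ?_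
      have := hLv (ball_subset_closedBall hx)
      simp only [← hLdef, this]
      ring
    rw [h7] at h6
    have hv0 := nb_zero hR hv.continuousOn (nonpos_of_mul_nonpos_right h6 hτ)
    obtain ⟨x, hx, hxne⟩ := hne
    exact hxne (hv0 hx)

/-- **First Neumann eigenfunctions of `Δ` on a ball are first Neumann eigenfunctions of
`Δ^(2m)`.** If `u` is a nonzero function, smooth on the closed ball `B_R(0) ⊂ ℝⁿ` (`n ≥ 2`,
`R > 0`, `m ≥ 1`), with `Δu = −μ₁(B_R(0))·u` in the ball and `∂u/∂n = 0` on the sphere, then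
`Δ^(2m)u = Υ̂₁(B_R(0))·u` in the ball together with `∂(Δʲu)/∂n = 0` on the sphere for all
`j = 0, 1, …, 2m−1`. -/
theorem first_lap_eigenfunction_is_polyharmonic_eigenfunction {n m : ℕ} (hn : 2 ≤ n)
    (hm : 1 ≤ m) (R : ℝ) (hR : 0 < R) (μ₁ Υ₁ : ℝ)
    (hμ : IsLeast {μ : ℝ | 0 < μ ∧ IsLapNeumannEigenvalueBall n R μ} μ₁)
    (hΥ : IsLeast {Υ : ℝ | 0 < Υ ∧ IsPolyLapNeumannEigenvalueBall n m R Υ} Υ₁)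
    (u : EuclideanSpace ℝ (Fin n) → ℝ)
    (hu_smooth : ContDiffOn ℝ (⊤ : ℕ∞) u (closedBall 0 R))
    (hu_ne : ∃ x ∈ closedBall (0 : EuclideanSpace ℝ (Fin n)) R, u x ≠ 0)
    (hu_eig : ∀ x ∈ ball (0 : EuclideanSpace ℝ (Fin n)) R,
      lapWithin (closedBall 0 R) u x = -μ₁ * u x)
    (hu_bd : ∀ x : EuclideanSpace ℝ (Fin n), ‖x‖ = R →
      fderivWithin ℝ u (closedBall 0 R) x (‖x‖⁻¹ • x) = 0) :
    (∀ x ∈ ball (0 : EuclideanSpace ℝ (Fin n)) R,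
      (lapWithin (closedBall 0 R))^[2 * m] u x = Υ₁ * u x) ∧
    (∀ j < 2 * m, ∀ x : EuclideanSpace ℝ (Fin n), ‖x‖ = R →
      fderivWithin ℝ ((lapWithin (closedBall 0 R))^[j] u) (closedBall 0 R) x (‖x‖⁻¹ • x) = 0) := by
  have hsm := nb_iter_smooth hR hu_smooth
  have hK : EqOn (lapWithin (closedBall 0 R) u) (fun x => -μ₁ * u x) (closedBall 0 R) :=
    nb_extend hR (nb_lap_smooth hR hu_smooth).continuousOn
      (continuousOn_const.mul hu_smooth.continuousOn) hu_eig
  have hiter : ∀ j, EqOn ((lapWithin (closedBall 0 R))^[j] u) (fun x => 0 + (-μ₁) ^ j * u x)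
      (closedBall 0 R) := by
    intro j
    induction j with
    | zero => intro x hx; simp
    | succ j ih =>
      intro x hx
      rw [Function.iterate_succ_apply', nb_congr ih hx,
        nb_lin hR (f := fun _ => 0) _ contDiffOn_const hu_smooth hx]
      simp only [nb_zeroL, hK hx]
      ring
  have hN : ∀ j, NbN R ((lapWithin (closedBall 0 R))^[j] u) := fun j =>
    nb_congrN (hiter j) (nb_linN hR _ contDiffOn_const hu_smooth nb_zeroN hu_bd)
  have hpow : ∀ x ∈ closedBall (0 : EuclideanSpace ℝ (Fin n)) R,
      (lapWithin (closedBall 0 R))^[2 * m] u x = μ₁ ^ (2 * m) * u x := by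
    intro x hx
    rw [hiter _ hx]
    simp only
    rw [zero_add, Even.neg_pow (even_two_mul m)]
  have hμ0 : 0 < μ₁ := hμ.1.1
  have hle : Υ₁ ≤ μ₁ ^ (2 * m) := hΥ.2 ⟨by positivity, u, hu_smooth, hu_ne,
    fun x hx => hpow x (ball_subset_closedBall hx), fun j _ => hN j⟩
  have hge : μ₁ ^ (2 * m) ≤ Υ₁ := by
    obtain ⟨hΥ0, hΥe⟩ := hΥ.1
    have h2m : 2 * m ≠ 0 := by omega
    obtain ⟨τ, hτ, hτe⟩ : ∃ τ : ℝ, 0 < τ ∧ τ ^ (2 * m) = Υ₁ :=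
      ⟨Υ₁ ^ ((2 * m : ℕ) : ℝ)⁻¹, Real.rpow_pos_of_pos hΥ0 _,
        Real.rpow_inv_natCast_pow hΥ0.le h2m⟩
    rw [← hτe] at hΥe ⊢
    have := hμ.2 ⟨hτ, nb_poly_to_lap hm hR hτ hΥe⟩
    gcongr
  have hE : Υ₁ = μ₁ ^ (2 * m) := le_antisymm hle hge
  refine ⟨fun x hx => ?_, fun j _ => hN j⟩
  rw [hE]
  exact hpow x (ball_subset_closedBall hx)
end
end
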